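/- arXiv:1306.3841 — 2 statements merged into one kernel-verified Lean document; each statement's English description precedes it below -/
import Mathlib

section
/- Let E = E(2,M,p) be a planar fractal percolation with M^{-2} < p. Fix θ ∈ (0, π/4) and ε ∈ (0, min{p, 1/10}) with Mp(1+ε) < 1, and set r := √2·p²·ε²/9, λ := pM(1 + 2ε/3) (so λ < 1), and b_n := (8 log M / r)·n. Let (𝔏_n^θ)_{n≥1} be families of segments built from nested finite sets Δ_n ⊂ Δ_{n+1} ⊂ Δ and A_n^θ ⊂ A_{n+1}^θ ⊂ (θ, π/2 − θ), where Δ_n is an M^{-2n}-dense subset of the diagonal Δ of cardinality M^{2n} and A_n^θ is an M^{-2n}-dense subset of (θ, π/2 − θ) of cardinality M^{2n}; 𝔏_n^θ consists of the segments ℓ ∈ 𝔏^θ with z(ℓ) ∈ Δ_n and Arg(ℓ) ∈ A_n^θ. Define the random variables a_n := max_{ℓ ∈ 𝔏_n^θ} M^{n−1} L_{n−1}(ℓ). Then ℙ-almost surely there exists N₀ (depending on the realization) such that for all n ≥ N₀, either a_n ≤ b_n or a_{n+1} ≤ λ·a_n. -/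
open MeasureTheory Set ENNReal ProbabilityTheory Real

noncomputable section

/-- The alphabet indexing the `M^d` subcubes of a cube in `[0,1]^d`. -/
abbrev Alpha (d M : ℕ) : Type := Fin d → Fin M

/-- Finite nonempty words over the alphabet; they index `M`-adic cubes. -/
abbrev Word (d M : ℕ) : Type := {w : List (Alpha d M) // w ≠ []}

/-- The sample space: `{0,1}`-labelings of all finite nonempty words. -/
abbrev PercSpace (d M : ℕ) : Type := Word d M → Bool

/-- `P` is the product measure making the labels i.i.d. Bernoulli(`p`). -/
def IsBernoulliPerc (d M : ℕ) (p : ℝ) (P : Measure (PercSpace d M)) : Prop :=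
  IsProbabilityMeasure P ∧
    ∀ (S : Finset (Word d M)) (b : Word d M → Bool),
      P {ω | ∀ w ∈ S, ω w = b w} =
        ∏ w ∈ S, if b w then ENNReal.ofReal p else ENNReal.ofReal (1 - p)

/-- A level-`w.length` cube is retained iff its word and every nonempty prefix
of its word carry label 1. -/
def Retained (d M : ℕ) (ω : PercSpace d M) (w : List (Alpha d M)) : Prop :=
  ∀ (u : List (Alpha d M)) (hu : u ≠ []), u <+: w → ω ⟨u, hu⟩ = true

/-- The `i`-th coordinate of the lower-left corner of the cube indexed by `w`. -/
def wordBase (d M : ℕ) (w : List (Alpha d M)) (i : Fin d) : ℝ :=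
  ∑ j : Fin w.length, ((w.get j) i : ℝ) * (M : ℝ) ^ (-(j : ℤ) - 1)

/-- The closed `M`-adic cube of level `w.length` indexed by the word `w`. -/
def wordCube (d M : ℕ) (w : List (Alpha d M)) : Set (EuclideanSpace ℝ (Fin d)) :=
  {x | ∀ i, wordBase d M w i ≤ x i ∧ x i ≤ wordBase d M w i + (M : ℝ) ^ (-(w.length : ℤ))}

/-- `E_n`, the union of the retained level-`n` cubes. -/
def approx (d M : ℕ) (ω : PercSpace d M) (n : ℕ) : Set (EuclideanSpace ℝ (Fin d)) :=
  ⋃ w ∈ {w : List (Alpha d M) | w.length = n ∧ Retained d M ω w}, wordCube d M w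

/-- The fractal percolation set `E = ⋂_{n ≥ 1} E_n`. -/
def percLimit (d M : ℕ) (ω : PercSpace d M) : Set (EuclideanSpace ℝ (Fin d)) :=
  ⋂ n ∈ {n : ℕ | 1 ≤ n}, approx d M ω n

/-- The segment cut out of `[0,1]²` by the line through `z` with direction `v`. -/
def lineSeg (z v : EuclideanSpace ℝ (Fin 2)) : Set (EuclideanSpace ℝ (Fin 2)) :=
  {x | (∃ t : ℝ, x = z + t • v) ∧ ∀ i, 0 ≤ x i ∧ x i ≤ 1}

/-- The line through `z` with direction `v` meets the open unit square. -/
def MeetsOpenSquare (z v : EuclideanSpace ℝ (Fin 2)) : Prop :=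
  ∃ t : ℝ, ∀ i, 0 < (z + t • v) i ∧ (z + t • v) i < 1

/-- The line with direction `v` makes an acute angle `> θ` with both coordinate
axes (the angle with the `x`-axis has sine `|v 1|/‖v‖`, the one with the
`y`-axis has sine `|v 0|/‖v‖`). -/
def AngleSep (θ : ℝ) (v : EuclideanSpace ℝ (Fin 2)) : Prop :=
  Real.sin θ * ‖v‖ < |v 1| ∧ Real.sin θ * ‖v‖ < |v 0|

/-- The diagonal `Δ` of the unit square, from `(0,1)` to `(1,0)`. -/
def diagSeg : Set (EuclideanSpace ℝ (Fin 2)) :=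
  {x | x 0 + x 1 = 1 ∧ 0 ≤ x 0 ∧ x 0 ≤ 1}

/-- The unit direction vector of angle `α` with the `x`-axis. -/
def dirVec (α : ℝ) : EuclideanSpace ℝ (Fin 2) :=
  (WithLp.equiv 2 (Fin 2 → ℝ)).symm ![Real.cos α, Real.sin α]

/-!
The rescaled slice `M ^ n * L_n(ℓ)` is a sum, over the retained level-`n` cubes, of rescaled chord
lengths, each at most `√d`. Given the labels up to level `n`, the next rescaled slice is a sum of
independent Bernoulli variables weighted by the chords of the subcubes. Its mean is at most `p * M`
times the current slice, and the sum of the squares of its weights is at most a constant times that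
slice. Hence, if the maximal slice `A` exceeds `b`, Hoeffding's inequality bounds the probability
that the next slice of a given line exceeds its mean by a fixed proportion of `A` by `exp (-c * b)`;
for `b` a large multiple of `n` this beats the polynomial-in-`M ^ n` number of lines, and
Borel-Cantelli applies.

The lines of the next family need not be in the current one, but each has a neighbour there at
distance at most `M ^ (-2 * n)`. The chord in a cube is a Lipschitz function of the line, and a line
of positive slope meets at most `d * M ^ n` level-`n` cubes in a chord of positive length, so that
the two rescaled slices differ by a bounded amount, negligible against `b`.
-/

/-! ### Probability -/

lemma measure_le_of_forall_inter_fiber_le {Ω α : Type*} [MeasurableSpace Ω] [MeasurableSpace α]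
    [Countable α] [MeasurableSingletonClass α] {μ : Measure Ω} [IsProbabilityMeasure μ]
    {X : Ω → α} (hX : Measurable X) {F : Set Ω} {c : ℝ≥0∞}
    (h : ∀ ω₀, μ (F ∩ X ⁻¹' {X ω₀}) ≤ c * μ (X ⁻¹' {X ω₀})) : μ F ≤ c := by
  have fiber_le (x : α) : μ (F ∩ X ⁻¹' {x}) ≤ c * μ (X ⁻¹' {x}) := by
    by_cases hx : ∃ ω₀, X ω₀ = x
    · obtain ⟨ω₀, rfl⟩ := hx
      exact h ω₀
    · have : X ⁻¹' {x} = ∅ := by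
        ext ω
        simpa using fun hω => hx ⟨ω, hω⟩
      simp [this]
  calc μ F ≤ μ (⋃ x, F ∩ X ⁻¹' {x}) := measure_mono fun ω hω => by simpa using hω
    _ ≤ ∑' x, μ (F ∩ X ⁻¹' {x}) := measure_iUnion_le _
    _ ≤ ∑' x, c * μ (X ⁻¹' {x}) := ENNReal.tsum_le_tsum fiber_le
    _ = c * ∑' x, μ (X ⁻¹' {x}) := ENNReal.tsum_mul_left
    _ = c * μ univ := by
      rw [← measure_iUnion (fun x y hxy => (disjoint_singleton.mpr hxy).preimage X)
        (fun x => hX (measurableSet_singleton x)), ← preimage_iUnion, iUnion_of_singleton,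
        preimage_univ]
    _ = c := by rw [measure_univ, mul_one]

lemma ae_eventually_notMem_of_eventually_le_ofReal {Ω : Type*} [MeasurableSpace Ω] {μ : Measure Ω}
    {F : ℕ → Set Ω} {f : ℕ → ℝ} (hf : Summable f)
    (hF : ∀ᶠ n in Filter.atTop, μ (F n) ≤ ENNReal.ofReal (f n)) :
    ∀ᵐ ω ∂μ, ∀ᶠ n in Filter.atTop, ω ∉ F n := by
  obtain ⟨N, hN⟩ := Filter.eventually_atTop.mp hF
  have tail_finite : ∑' n, μ (F (n + N)) ≠ ∞ :=
    ne_top_of_le_ne_top ((summable_nat_add_iff N).mpr hf).tsum_ofReal_ne_top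
      (ENNReal.tsum_le_tsum fun n => hN _ (Nat.le_add_left N n))
  filter_upwards [ae_eventually_notMem tail_finite] with ω hω
  rwa [← Filter.map_add_atTop_eq_nat N, Filter.eventually_map]

lemma hasSubgaussianMGF_mono {Ω : Type*} [MeasurableSpace Ω] {μ : Measure Ω} {X : Ω → ℝ}
    {c c' : NNReal} (h : HasSubgaussianMGF X c μ) (hc : c ≤ c') : HasSubgaussianMGF X c' μ where
  integrable_exp_mul := h.integrable_exp_mul
  mgf_le t := (h.mgf_le t).trans (by gcongr)

lemma measureReal_sum_ge_le_of_mem_Icc {Ω ι : Type*} [MeasurableSpace Ω] {μ : Measure Ω}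
    [IsProbabilityMeasure μ] {X : ι → Ω → ℝ} (hX : ∀ i, AEMeasurable (X i) μ)
    (hindep : iIndepFun X μ) {c : ι → ℝ} (hXc : ∀ i, ∀ᵐ ω ∂μ, X i ω ∈ Icc 0 (c i))
    {T : Finset ι} {V t x : ℝ} (hV : 0 < V) (hcV : ∑ i ∈ T, c i ^ 2 ≤ V) (ht : 0 ≤ t)
    (hx : ∑ i ∈ T, μ[X i] + t ≤ x) :
    μ.real {ω | x ≤ ∑ i ∈ T, X i ω} ≤ Real.exp (-2 * t ^ 2 / V) := by
  have centered_indep : iIndepFun (fun i ω => X i ω - μ[X i]) μ :=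
    hindep.comp (fun i (y : ℝ) => y - ∫ ω, X i ω ∂μ) fun i => measurable_id.sub_const _
  have variance_proxy_le : ∑ i ∈ T, (‖c i - 0‖₊ / 2) ^ 2 ≤ (V / 4).toNNReal := by
    rw [← NNReal.coe_le_coe, Real.coe_toNNReal _ (by positivity)]
    simp only [sub_zero, NNReal.coe_sum, NNReal.coe_pow, NNReal.coe_div, coe_nnnorm,
      Real.norm_eq_abs, NNReal.coe_ofNat, div_pow, sq_abs, ← Finset.sum_div]
    linarith
  have centered_subgaussian :
      HasSubgaussianMGF (fun ω => ∑ i ∈ T, (X i ω - μ[X i])) (V / 4).toNNReal μ :=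
    hasSubgaussianMGF_mono (HasSubgaussianMGF.sum_of_iIndepFun centered_indep
      fun i _ => hasSubgaussianMGF_of_mem_Icc (hX i) (hXc i)) variance_proxy_le
  calc μ.real {ω | x ≤ ∑ i ∈ T, X i ω}
      ≤ μ.real {ω | t ≤ ∑ i ∈ T, (X i ω - μ[X i])} := by
        refine measureReal_mono fun ω (hω : x ≤ _) => ?_
        rw [mem_ofPred_eq, Finset.sum_sub_distrib]
        linarith
    _ ≤ Real.exp (-t ^ 2 / (2 * (V / 4).toNNReal)) := centered_subgaussian.measure_ge_le ht
    _ = Real.exp (-2 * t ^ 2 / V) := by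
        rw [Real.coe_toNNReal _ (by positivity)]
        congr 1
        field_simp
        ring

namespace IsBernoulliPerc

variable {d M : ℕ} {p : ℝ} {P : Measure (PercSpace d M)}

lemma measure_eval_eq (hP : IsBernoulliPerc d M p P) (w : Word d M) (b : Bool) :
    P {ω | ω w = b} = if b then ENNReal.ofReal p else ENNReal.ofReal (1 - p) := by
  simpa using hP.2 {w} fun _ => b

lemma iIndepFun_eval (hP : IsBernoulliPerc d M p P) :
    iIndepFun (fun (w : Word d M) (ω : PercSpace d M) => ω w) P := by
  classical
  have := hP.1
  rw [iIndepFun_iff_finset]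
  intro S
  have hmeas (w : S) : Measurable fun ω : PercSpace d M => ω w := measurable_pi_apply _
  refine (iIndepFun_iff_map_fun_eq_pi_map fun w => (hmeas w).aemeasurable).mpr
    (Measure.ext_of_singleton fun η => ?_)
  rw [Measure.map_apply (measurable_pi_lambda _ hmeas) (measurableSet_singleton _),
    Measure.pi_singleton]
  have cylinder_eq : (fun (ω : PercSpace d M) (w : S) => ω w) ⁻¹' {η} =
      {ω | ∀ w ∈ S, ω w = if h : w ∈ S then η ⟨w, h⟩ else true} := by
    ext ω
    simp +contextual [funext_iff]
  calc P ((fun (ω : PercSpace d M) (w : S) => ω w) ⁻¹' {η})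
      = ∏ w : S, if η w then ENNReal.ofReal p else ENNReal.ofReal (1 - p) := by
        rw [cylinder_eq, hP.2, ← Finset.prod_coe_sort]
        simp
    _ = ∏ w : S, (P.map fun ω => ω w) {η w} := by
        refine Finset.prod_congr rfl fun w _ => ?_
        rw [Measure.map_apply (hmeas w) (measurableSet_singleton _), ← hP.measure_eval_eq w (η w)]
        rfl

lemma measure_inter_eq_mul (hP : IsBernoulliPerc d M p P) {S T : Finset (Word d M)}
    (hST : Disjoint S T) {F G : Set (PercSpace d M)} (hF : DependsOn (· ∈ F) (S : Set (Word d M)))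
    (hG : DependsOn (· ∈ G) (T : Set (Word d M))) : P (F ∩ G) = P F * P G := by
  have preimage_image {R : Finset (Word d M)} {H : Set (PercSpace d M)}
      (hH : DependsOn (· ∈ H) (R : Set (Word d M))) :
      (fun (ω : PercSpace d M) (w : R) => ω w) ⁻¹' ((fun ω (w : R) => ω w) '' H) = H := by
    refine Subset.antisymm ?_ (subset_preimage_image _ H)
    rintro ω ⟨ω', hω', h⟩
    exact (hH fun w hw => congrFun h ⟨w, hw⟩).mp hω'
  have := (hP.iIndepFun_eval.indepFun_finset S T hST fun w => measurable_pi_apply w)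
    |>.measure_inter_preimage_eq_mul _ _
      (toFinite ((fun ω (w : S) => ω w) '' F)).measurableSet
      (toFinite ((fun ω (w : T) => ω w) '' G)).measurableSet
  rwa [preimage_image hF, preimage_image hG] at this

/-- Once the labels on `S` are fixed, `F` is contained in an event `G` depending on other labels
only, so `c` bounds its conditional probability. -/
lemma measure_le_of_forall_cylinder (hP : IsBernoulliPerc d M p P) (S : Finset (Word d M))
    {F : Set (PercSpace d M)} {c : ℝ≥0∞}
    (h : ∀ ω₀ : PercSpace d M, ∃ (T : Finset (Word d M)) (G : Set (PercSpace d M)), Disjoint S T ∧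
      DependsOn (· ∈ G) (T : Set (Word d M)) ∧ P G ≤ c ∧
      ∀ ω ∈ F, (∀ w ∈ S, ω w = ω₀ w) → ω ∈ G) : P F ≤ c := by
  have := hP.1
  refine measure_le_of_forall_inter_fiber_le (X := fun (ω : PercSpace d M) (w : S) => ω w)
    (by fun_prop) fun ω₀ => ?_
  obtain ⟨T, G, hST, hG, hGc, hFG⟩ := h ω₀
  set Q : Set (PercSpace d M) := (fun (ω : PercSpace d M) (w : S) => ω w) ⁻¹' {fun w : S => ω₀ w}
  have mem_Q (ω : PercSpace d M) : ω ∈ Q ↔ ∀ w ∈ S, ω w = ω₀ w := by simp [Q, funext_iff]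
  have hQ : DependsOn (· ∈ Q) (S : Set (Word d M)) := fun ω ω' hωω' => by
    simp only [mem_Q]
    exact propext (forall₂_congr fun w hw => by rw [hωω' w hw])
  calc P (F ∩ Q) ≤ P (Q ∩ G) :=
        measure_mono fun ω hω => ⟨hω.2, hFG ω hω.1 ((mem_Q ω).mp hω.2)⟩
    _ = P Q * P G := hP.measure_inter_eq_mul hST hQ hG
    _ ≤ c * P Q := by
        rw [mul_comm]
        gcongr

lemma measureReal_weighted_sum_ge_le (hP : IsBernoulliPerc d M p P) (hp : 0 ≤ p)
    {T : Finset (Word d M)} {c : Word d M → ℝ} (hc : ∀ w, 0 ≤ c w) {V t x : ℝ} (hV : 0 < V)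
    (hcV : ∑ w ∈ T, c w ^ 2 ≤ V) (ht : 0 ≤ t) (hx : p * ∑ w ∈ T, c w + t ≤ x) :
    P.real {ω | x ≤ ∑ w ∈ T, if ω w then c w else 0} ≤ Real.exp (-2 * t ^ 2 / V) := by
  have := hP.1
  have hmeas (w : Word d M) : Measurable fun b : Bool => if b then c w else 0 :=
    measurable_of_countable _
  have mean_eq (w : Word d M) : ∫ ω, (if ω w then c w else 0) ∂P = p * c w := by
    calc ∫ ω, (if ω w then c w else 0) ∂P
        = ∫ ω, ((fun ω : PercSpace d M => ω w) ⁻¹' {true}).indicator (fun _ => c w) ω ∂P := by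
          simp [indicator]
      _ = P.real {ω | ω w = true} * c w :=
          integral_indicator_const _ (measurable_pi_apply w (measurableSet_singleton true))
      _ = p * c w := by
          rw [measureReal_def, hP.measure_eval_eq w true, if_pos rfl, ENNReal.toReal_ofReal hp]
  refine measureReal_sum_ge_le_of_mem_Icc (X := fun w (ω : PercSpace d M) => if ω w then c w else 0)
    (fun w => ((hmeas w).comp (measurable_pi_apply w)).aemeasurable)
    (hP.iIndepFun_eval.comp _ hmeas) (fun w => ae_of_all _ fun ω => ?_) hV hcV ht ?_
  · split_ifs <;> simp [hc w]
  · simpa only [mean_eq, ← Finset.mul_sum] using hx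

end IsBernoulliPerc

/-! ### Chords of boxes -/

lemma card_le_of_isChain {ι : Type*} [Fintype ι] [Nonempty ι] {K : Finset (ι → ℕ)} {N : ℕ}
    (hK : IsChain (· ≤ ·) (K : Set (ι → ℕ))) (hN : ∀ k ∈ K, ∀ i, k i < N) :
    K.card ≤ Fintype.card ι * N := by
  have sum_lt : ∀ k ∈ K, ∑ i, k i < Fintype.card ι * N := fun k hk => by
    simpa using Finset.sum_lt_sum_of_nonempty Finset.univ_nonempty fun i _ => hN k hk i
  have eq_of_le {k k' : ι → ℕ} (h : k ≤ k') (hsum : ∑ i, k i = ∑ i, k' i) : k = k' :=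
    funext fun i => (Finset.sum_eq_sum_iff_of_le fun i _ => h i).mp hsum i (Finset.mem_univ i)
  have sum_injOn : InjOn (fun k => ∑ i, k i) (K : Set (ι → ℕ)) := fun k hk k' hk' hsum =>
    (hK.total hk hk').elim (eq_of_le · hsum) fun h => (eq_of_le h hsum.symm).symm
  simpa using Finset.card_le_card_of_injOn _
    (fun k hk => Finset.mem_coe.mpr (Finset.mem_range.mpr (sum_lt k hk))) sum_injOn

lemma abs_div_sub_div_le {s δ x x' y y' : ℝ} (hs : 0 < s) (hy : s ≤ y) (hy' : s ≤ y')
    (hx : |x - x'| ≤ δ) (hx' : |x'| ≤ 1) (hyy' : |y - y'| ≤ δ) :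
    |x / y - x' / y'| ≤ (1 / s + 1 / s ^ 2) * δ := by
  have y_pos : 0 < y := hs.trans_le hy
  have y'_pos : 0 < y' := hs.trans_le hy'
  have hδ : 0 ≤ δ := (abs_nonneg _).trans hx
  calc |x / y - x' / y'| = |(x - x') / y + x' * (y' - y) / (y * y')| := by
        congr 1
        field_simp
        ring
    _ ≤ |x - x'| / y + |x'| * |y - y'| / (y * y') := by
        refine (abs_add_le _ _).trans_eq ?_
        rw [abs_div, abs_div, abs_mul, abs_of_pos y_pos, abs_of_pos (mul_pos y_pos y'_pos),
          abs_sub_comm y']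
    _ ≤ δ / s + 1 * δ / (s * s) := by gcongr
    _ = (1 / s + 1 / s ^ 2) * δ := by ring

/-- The parametrization by `ℝ` of the line through `z` with direction `v`. -/
def lineParam {E : Type*} [AddCommGroup E] [Module ℝ E] (z v : E) (t : ℝ) : E :=
  z + t • v

/-- The length of the part of the line through `z` with unit direction `v` that lies in `B`,
measured in the parameter of the line. -/
def chordLength {E : Type*} [AddCommGroup E] [Module ℝ E] (B : Set E) (z v : E) : ℝ :=
  volume.real (lineParam z v ⁻¹' B)

section NormedSpace

variable {E : Type*} [NormedAddCommGroup E] [NormedSpace ℝ E]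

lemma isometry_lineParam (z : E) {v : E} (hv : ‖v‖ = 1) : Isometry (lineParam z v) :=
  Isometry.of_dist_eq fun s t => by
    rw [lineParam, lineParam, dist_add_left, dist_eq_norm, ← sub_smul, norm_smul, hv, mul_one,
      dist_eq_norm]

lemma hausdorffMeasure_inter_range_lineParam [MeasurableSpace E] [BorelSpace E] (B : Set E) (z : E)
    {v : E} (hv : ‖v‖ = 1) :
    μH[1] (B ∩ range (lineParam z v)) = volume (lineParam z v ⁻¹' B) := by
  rw [← (isometry_lineParam z hv).hausdorffMeasure_preimage (Or.inl zero_le_one) B,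
    hausdorffMeasure_real]

end NormedSpace

/-- The closed axis-parallel box with corners `l` and `u`. -/
def box {ι : Type*} (l u : ι → ℝ) : Set (EuclideanSpace ℝ ι) :=
  {x | ∀ i, l i ≤ x i ∧ x i ≤ u i}

section Box

variable {ι : Type*} {l u l' u' : ι → ℝ} {z v z' v' : EuclideanSpace ℝ ι}

lemma lineParam_mem_box {t : ℝ} :
    lineParam z v t ∈ box l u ↔ ∀ i, l i ≤ z i + t * v i ∧ z i + t * v i ≤ u i := by
  simp [lineParam, box]

lemma aedisjoint_lineParam_preimage_box {i : ι} (hv : v i ≠ 0) (h : u i ≤ l' i) :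
    AEDisjoint volume (lineParam z v ⁻¹' box l u) (lineParam z v ⁻¹' box l' u') := by
  refine Subsingleton.measure_zero (fun s hs t ht => ?_) _
  have coord_eq {r : ℝ} (hr : r ∈ lineParam z v ⁻¹' box l u ∩ lineParam z v ⁻¹' box l' u') :
      z i + r * v i = u i :=
    le_antisymm (lineParam_mem_box.mp hr.1 i).2 (h.trans (lineParam_mem_box.mp hr.2 i).1)
  exact mul_right_cancel₀ hv (by linarith [coord_eq hs, coord_eq ht])

lemma chordLength_box_le [Fintype ι] {h : ℝ} (hlu : ∀ i, u i - l i ≤ h) (hh : 0 ≤ h)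
    (hv : ‖v‖ = 1) : chordLength (box l u) z v ≤ √(Fintype.card ι) * h := by
  have dist_le {x y : EuclideanSpace ℝ ι} (hx : x ∈ box l u) (hy : y ∈ box l u) :
      dist x y ≤ √(Fintype.card ι) * h := by
    calc dist x y = √(∑ i, dist (x i) (y i) ^ 2) := EuclideanSpace.dist_eq x y
      _ ≤ √(∑ _i : ι, h ^ 2) := by
          gcongr with i
          rw [Real.dist_eq, abs_le]
          constructor <;> linarith [hx i, hy i, hlu i]
      _ = √(Fintype.card ι) * h := by
          simp [Real.sqrt_mul, Real.sqrt_sq hh]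
  refine ENNReal.toReal_le_of_le_ofReal (by positivity) ?_
  refine (Real.volume_le_diam _).trans (Metric.ediam_le_of_forall_dist_le fun s hs t ht => ?_)
  rw [← (isometry_lineParam z hv).dist_eq]
  exact dist_le hs ht

variable [Finite ι] [Nonempty ι]

lemma lineParam_preimage_box (hv : ∀ i, 0 < v i) :
    lineParam z v ⁻¹' box l u = Icc (⨆ i, (l i - z i) / v i) (⨅ i, (u i - z i) / v i) := by
  ext t
  rw [mem_preimage, lineParam_mem_box, mem_Icc, ciSup_le_iff (finite_range _).bddAbove,
    le_ciInf_iff (finite_range _).bddBelow, ← forall_and]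
  refine forall_congr' fun i => ?_
  rw [div_le_iff₀ (hv i), le_div_iff₀ (hv i), sub_le_iff_le_add', le_sub_iff_add_le']

lemma chordLength_box (hv : ∀ i, 0 < v i) :
    chordLength (box l u) z v =
      max ((⨅ i, (u i - z i) / v i) - ⨆ i, (l i - z i) / v i) 0 := by
  rw [chordLength, lineParam_preimage_box hv, Real.volume_real_Icc]

lemma exists_mem_interior_box_of_chordLength_pos (hv : ∀ i, 0 < v i)
    (h : 0 < chordLength (box l u) z v) :
    ∃ t, ∀ i, l i < z i + t * v i ∧ z i + t * v i < u i := by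
  have sup_lt_inf : ⨆ i, (l i - z i) / v i < ⨅ i, (u i - z i) / v i := by
    simpa [chordLength_box hv] using h
  obtain ⟨t, sup_lt, lt_inf⟩ := exists_between sup_lt_inf
  refine ⟨t, fun i => ⟨?_, ?_⟩⟩
  · have := (le_ciSup (finite_range _).bddAbove i).trans_lt sup_lt
    rw [div_lt_iff₀ (hv i)] at this
    linarith
  · have := lt_inf.trans_le (ciInf_le (finite_range _).bddBelow i)
    rw [lt_div_iff₀ (hv i)] at this
    linarith

lemma chordLength_box_le_add {s δ : ℝ} (hs : 0 < s) (hv : ∀ i, s ≤ v i) (hv' : ∀ i, s ≤ v' i)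
    (hz : ∀ i, |z i - z' i| ≤ δ) (hvv' : ∀ i, |v i - v' i| ≤ δ) (hl : ∀ i, |l i - z' i| ≤ 1)
    (hu : ∀ i, |u i - z' i| ≤ 1) :
    chordLength (box l u) z v ≤ chordLength (box l u) z' v' + 2 * ((1 / s + 1 / s ^ 2) * δ) := by
  have hδ : 0 ≤ δ := (abs_nonneg _).trans (hz (Classical.arbitrary ι))
  set K := (1 / s + 1 / s ^ 2) * δ
  have : 0 ≤ K := by positivity
  have crossing_close (x : ℝ) (i : ι) (hx : |x - z' i| ≤ 1) :
      |(x - z i) / v i - (x - z' i) / v' i| ≤ K := by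
    refine abs_div_sub_div_le hs (hv i) (hv' i) ?_ hx (hvv' i)
    rw [_root_.sub_sub_sub_cancel_left, abs_sub_comm]
    exact hz i
  have exit_le : ⨅ i, (u i - z i) / v i ≤ (⨅ i, (u i - z' i) / v' i) + K := by
    rw [← sub_le_iff_le_add]
    refine le_ciInf fun i => ?_
    linarith [ciInf_le (finite_range fun i => (u i - z i) / v i).bddBelow i,
      (abs_le.mp (crossing_close (u i) i (hu i))).2]
  have enter_le : ⨆ i, (l i - z' i) / v' i ≤ (⨆ i, (l i - z i) / v i) + K := by
    refine ciSup_le fun i => ?_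
    linarith [le_ciSup (finite_range fun i => (l i - z i) / v i).bddAbove i,
      (abs_le.mp (crossing_close (l i) i (hl i))).1]
  rw [chordLength_box fun i => hs.trans_le (hv i), chordLength_box fun i => hs.trans_le (hv' i),
    max_le_iff]
  constructor
  · linarith [le_max_left ((⨅ i, (u i - z' i) / v' i) - ⨆ i, (l i - z' i) / v' i) 0]
  · positivity

end Box

/-! ### Chords of `M`-adic cubes -/

section Cubes

variable {d M : ℕ} {w w' : List (Alpha d M)}

/-- The position `k ∈ {0, …, M ^ n - 1} ^ d` of the cube of the word `w` of length `n` in the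
`M`-adic grid. -/
def wordIdx (w : List (Alpha d M)) (i : Fin d) : ℕ :=
  Nat.ofDigits M (w.map fun a => (a i : ℕ)).reverse

lemma wordIdx_cons (a : Alpha d M) (w : List (Alpha d M)) (i : Fin d) :
    wordIdx (a :: w) i = wordIdx w i + M ^ w.length * a i := by
  simp [wordIdx, Nat.ofDigits_append]

lemma wordIdx_append_singleton (w : List (Alpha d M)) (a : Alpha d M) (i : Fin d) :
    wordIdx (w ++ [a]) i = a i + M * wordIdx w i := by
  simp [wordIdx, Nat.ofDigits_cons]

variable (hM : 1 < M)
include hM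

lemma wordIdx_lt (w : List (Alpha d M)) (i : Fin d) : wordIdx w i < M ^ w.length := by
  simpa [wordIdx] using Nat.ofDigits_lt_base_pow_length (b := M)
    (l := (w.map fun a => (a i : ℕ)).reverse) hM (by simp)

lemma eq_of_wordIdx_eq (hlen : w.length = w'.length) (h : wordIdx w = wordIdx w') : w = w' := by
  have digits_eq (i : Fin d) : w.map (fun a => (a i : ℕ)) = w'.map fun a => (a i : ℕ) :=
    List.reverse_injective <| Nat.ofDigits_inj_of_len_eq hM (by simpa using hlen) (by simp)
      (by simp) (congrFun h i)
  refine List.ext_getElem hlen fun j hj hj' => funext fun i => Fin.ext ?_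
  simpa [hj, hj'] using congrArg (·[j]?) (digits_eq i)

lemma wordBase_eq_wordIdx_div (w : List (Alpha d M)) (i : Fin d) :
    wordBase d M w i = wordIdx w i / (M : ℝ) ^ w.length := by
  have hM' : (M : ℝ) ≠ 0 := by positivity
  induction w with
  | nil => simp [wordBase, wordIdx]
  | cons a w ih =>
    have wordBase_cons :
        wordBase d M (a :: w) i = (a i : ℝ) * (M : ℝ)⁻¹ + wordBase d M w i / M := by
      simp only [wordBase, List.length_cons, Fin.sum_univ_succ, Finset.sum_div]
      congr 1
      · exact congrArg (_ * ·) (by simp)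
      · refine Finset.sum_congr rfl fun j _ => ?_
        simp [zpow_sub₀ hM', zpow_add₀ hM']
        field_simp
    rw [wordBase_cons, ih, wordIdx_cons, List.length_cons]
    push_cast
    field_simp
    ring

lemma wordCube_eq_box (w : List (Alpha d M)) :
    wordCube d M w = box (fun i => wordIdx w i / (M : ℝ) ^ w.length)
      (fun i => (wordIdx w i + 1) / (M : ℝ) ^ w.length) := by
  simp only [wordCube, box, wordBase_eq_wordIdx_div hM, zpow_neg, zpow_natCast, add_div, one_div]

lemma wordCube_subset_unitCube (w : List (Alpha d M)) : wordCube d M w ⊆ box 0 1 := by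
  have hMw : (0 : ℝ) < (M : ℝ) ^ w.length := by positivity
  rw [wordCube_eq_box hM]
  refine fun x hx i => ⟨(by positivity : (0 : ℝ) ≤ _).trans (hx i).1, (hx i).2.trans ?_⟩
  rw [Pi.one_apply, div_le_one hMw]
  exact_mod_cast wordIdx_lt hM w i

lemma wordCube_append_singleton_subset (w : List (Alpha d M)) (a : Alpha d M) :
    wordCube d M (w ++ [a]) ⊆ wordCube d M w := by
  have hMw : (0 : ℝ) < (M : ℝ) ^ w.length := by positivity
  have : (0 : ℝ) < M := by positivity
  rw [wordCube_eq_box hM, wordCube_eq_box hM]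
  intro x hx i
  have ha : ((a i : ℕ) : ℝ) + 1 ≤ M := mod_cast (a i).isLt
  obtain ⟨hl, hu⟩ := hx i
  simp only [wordIdx_append_singleton, List.length_append, List.length_singleton, pow_succ,
    Nat.cast_add, Nat.cast_mul] at hl hu
  refine ⟨le_trans ?_ hl, hu.trans ?_⟩
  · rw [div_le_div_iff₀ hMw (by positivity)]
    nlinarith [mul_nonneg hMw.le (Nat.cast_nonneg (α := ℝ) (a i : ℕ))]
  · rw [div_le_div_iff₀ (by positivity) hMw]
    nlinarith

variable {n : ℕ} {W : Finset (List (Alpha d M))} {z v z' v' : EuclideanSpace ℝ (Fin d)}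

lemma aedisjoint_lineParam_preimage_wordCube (hv : ∀ i, v i ≠ 0) (hlen : w.length = w'.length)
    (hne : w ≠ w') :
    AEDisjoint volume (lineParam z v ⁻¹' wordCube d M w) (lineParam z v ⁻¹' wordCube d M w') := by
  have aedisjoint_of_lt {w w' : List (Alpha d M)} (hlen : w.length = w'.length) {i : Fin d}
      (h : wordIdx w i < wordIdx w' i) :
      AEDisjoint volume (lineParam z v ⁻¹' wordCube d M w) (lineParam z v ⁻¹' wordCube d M w') := by
    rw [wordCube_eq_box hM, wordCube_eq_box hM, hlen]
    refine aedisjoint_lineParam_preimage_box (hv i) ?_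
    gcongr
    exact_mod_cast h
  obtain ⟨i, hi⟩ := Function.ne_iff.mp (mt (eq_of_wordIdx_eq hM hlen) hne)
  rcases hi.lt_or_gt with h | h
  · exact aedisjoint_of_lt hlen h
  · exact (aedisjoint_of_lt hlen.symm h).symm

lemma chordLength_wordCube_le (hv : ‖v‖ = 1) (w : List (Alpha d M)) :
    chordLength (wordCube d M w) z v ≤ √d / (M : ℝ) ^ w.length := by
  rw [wordCube_eq_box hM]
  refine (chordLength_box_le (h := 1 / (M : ℝ) ^ w.length) (fun i => ?_) (by positivity)
    hv).trans_eq ?_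
  · rw [← sub_div, add_sub_cancel_left]
  · rw [Fintype.card_fin, mul_one_div]

variable [NeZero d]

lemma chordLength_biUnion_wordCube (hv : ∀ i, 0 < v i) (hW : ∀ w ∈ W, w.length = n) :
    chordLength (⋃ w ∈ W, wordCube d M w) z v = ∑ w ∈ W, chordLength (wordCube d M w) z v := by
  have preimage_eq_Icc (w : List (Alpha d M)) :
      ∃ a b, lineParam z v ⁻¹' wordCube d M w = Icc a b := by
    rw [wordCube_eq_box hM]
    exact ⟨_, _, lineParam_preimage_box hv⟩
  simp only [chordLength, preimage_iUnion]
  refine measureReal_biUnion_finset₀ (fun w hw w' hw' hne => ?_) (fun w _ => ?_) fun w _ => ?_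
  · exact aedisjoint_lineParam_preimage_wordCube hM (fun i => (hv i).ne')
      ((hW w hw).trans (hW w' hw').symm) hne
  · obtain ⟨a, b, h⟩ := preimage_eq_Icc w
    exact h ▸ nullMeasurableSet_Icc
  · obtain ⟨a, b, h⟩ := preimage_eq_Icc w
    exact h ▸ measure_Icc_lt_top.ne

lemma sum_chordLength_append_singleton_le (hv : ∀ i, 0 < v i) (w : List (Alpha d M)) :
    ∑ a, chordLength (wordCube d M (w ++ [a])) z v ≤ chordLength (wordCube d M w) z v := by
  classical
  have append_injective : Function.Injective fun a : Alpha d M => w ++ [a] := fun a b h => by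
    simpa using h
  calc ∑ a, chordLength (wordCube d M (w ++ [a])) z v
      = ∑ u ∈ Finset.univ.image fun a => w ++ [a], chordLength (wordCube d M u) z v :=
        (Finset.sum_image (f := fun u => chordLength (wordCube d M u) z v)
          append_injective.injOn).symm
    _ = chordLength (⋃ u ∈ Finset.univ.image fun a => w ++ [a], wordCube d M u) z v :=
        (chordLength_biUnion_wordCube hM hv (n := w.length + 1) (by simp)).symm
    _ ≤ chordLength (wordCube d M w) z v := by
        refine measureReal_mono (preimage_mono ?_) ?_
        · simpa using wordCube_append_singleton_subset hM w
        · rw [wordCube_eq_box hM, lineParam_preimage_box hv]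
          exact measure_Icc_lt_top.ne

/-- The cubes that a line with positive slopes crosses are visited in increasing order of all
coordinates. -/
lemma card_chordLength_pos_le (hv : ∀ i, 0 < v i) (hW : ∀ w ∈ W, w.length = n)
    (hpos : ∀ w ∈ W, 0 < chordLength (wordCube d M w) z v) : W.card ≤ d * M ^ n := by
  have hMn : (0 : ℝ) < (M : ℝ) ^ n := by positivity
  have crossing : ∀ w ∈ W, ∃ t, ∀ i, wordIdx w i / (M : ℝ) ^ n < z i + t * v i ∧
      z i + t * v i < (wordIdx w i + 1) / (M : ℝ) ^ n := fun w hw => by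
    have := hpos w hw
    rw [wordCube_eq_box hM, hW w hw] at this
    exact exists_mem_interior_box_of_chordLength_pos hv this
  choose! t ht using crossing
  have idx_mono : ∀ w ∈ W, ∀ w' ∈ W, t w ≤ t w' → wordIdx w ≤ wordIdx w' := by
    intro w hw w' hw' htt i
    have idx_lt : (wordIdx w i : ℝ) < wordIdx w' i + 1 := by
      refine (div_lt_div_iff_of_pos_right hMn).mp ?_
      calc wordIdx w i / (M : ℝ) ^ n < z i + t w * v i := (ht w hw i).1
        _ ≤ z i + t w' * v i := by gcongr; exact (hv i).le
        _ < (wordIdx w' i + 1) / (M : ℝ) ^ n := (ht w' hw' i).2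
    exact Nat.lt_add_one_iff.mp (by exact_mod_cast idx_lt)
  classical
  have idx_chain : IsChain (· ≤ ·) (W.image wordIdx : Set (Fin d → ℕ)) := by
    simp only [Finset.coe_image]
    rintro _ ⟨w, hw, rfl⟩ _ ⟨w', hw', rfl⟩ -
    exact (le_total (t w) (t w')).imp (idx_mono w hw w' hw') (idx_mono w' hw' w hw)
  have idx_injOn : InjOn wordIdx (W : Set (List (Alpha d M))) := fun w hw w' hw' h =>
    eq_of_wordIdx_eq hM ((hW w hw).trans (hW w' hw').symm) h
  rw [← Finset.card_image_of_injOn idx_injOn]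
  simpa using card_le_of_isChain (N := M ^ n) idx_chain <| by
    simpa using fun w hw i => hW w hw ▸ wordIdx_lt hM w i

lemma sum_chordLength_le_add {s δ : ℝ} (hs : 0 < s) (hv : ∀ i, s ≤ v i) (hv' : ∀ i, s ≤ v' i)
    (hz : ∀ i, |z i - z' i| ≤ δ) (hvv' : ∀ i, |v i - v' i| ≤ δ) (hz' : z' ∈ box 0 1)
    (hW : ∀ w ∈ W, w.length = n) :
    ∑ w ∈ W, chordLength (wordCube d M w) z v ≤
      ∑ w ∈ W, chordLength (wordCube d M w) z' v' +
        d * (M : ℝ) ^ n * (2 * ((1 / s + 1 / s ^ 2) * δ)) := by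
  have hδ : 0 ≤ δ := (abs_nonneg _).trans (hz 0)
  set K := 2 * ((1 / s + 1 / s ^ 2) * δ)
  have : 0 ≤ K := by positivity
  have chord_le (w : List (Alpha d M)) : chordLength (wordCube d M w) z v ≤
      chordLength (wordCube d M w) z' v' +
        if 0 < chordLength (wordCube d M w) z v then K else 0 := by
    split_ifs with h
    · rw [wordCube_eq_box hM]
      have corner_close {k : ℕ} (hk : k ≤ M ^ w.length) (i : Fin d) :
          |k / (M : ℝ) ^ w.length - z' i| ≤ 1 :=
        abs_sub_le_of_nonneg_of_le (by positivity)
          ((div_le_one (by positivity)).mpr (by exact_mod_cast hk)) (hz' i).1 (hz' i).2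
      exact chordLength_box_le_add hs hv hv' hz hvv'
        (fun i => corner_close (wordIdx_lt hM w i).le i)
        (fun i => by exact_mod_cast corner_close (wordIdx_lt hM w i) i)
    · rw [add_zero]
      exact (not_lt.mp h).trans measureReal_nonneg
  calc ∑ w ∈ W, chordLength (wordCube d M w) z v
      ≤ ∑ w ∈ W, (chordLength (wordCube d M w) z' v' +
          if 0 < chordLength (wordCube d M w) z v then K else 0) :=
        Finset.sum_le_sum fun w _ => chord_le w
    _ = ∑ w ∈ W, chordLength (wordCube d M w) z' v' +
          (W.filter fun w => 0 < chordLength (wordCube d M w) z v).card * K := by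
        rw [Finset.sum_add_distrib, ← Finset.sum_filter, Finset.sum_const, nsmul_eq_mul]
    _ ≤ ∑ w ∈ W, chordLength (wordCube d M w) z' v' + d * (M : ℝ) ^ n * K := by
        gcongr
        exact_mod_cast card_chordLength_pos_le hM (fun i => hs.trans_le (hv i))
          (fun w hw => hW w (Finset.mem_filter.mp hw).1) fun w hw => (Finset.mem_filter.mp hw).2

end Cubes

/-! ### Slices of the percolation sets -/

section RetainedWords

variable {d M : ℕ}

/-- The words of the retained level-`n` cubes. -/
def retainedWords (ω : PercSpace d M) (n : ℕ) : Finset (List (Alpha d M)) :=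
  ((List.finite_length_eq (Alpha d M) n).subset fun _ hw => hw.1 :
    {w : List (Alpha d M) | w.length = n ∧ Retained d M ω w}.Finite).toFinset

lemma mem_retainedWords {ω : PercSpace d M} {n : ℕ} {w : List (Alpha d M)} :
    w ∈ retainedWords ω n ↔ w.length = n ∧ Retained d M ω w :=
  Finite.mem_toFinset _

lemma length_of_mem_retainedWords {ω : PercSpace d M} {n : ℕ} :
    ∀ w ∈ retainedWords ω n, w.length = n :=
  fun _ hw => (mem_retainedWords.mp hw).1

lemma approx_eq_biUnion_retainedWords (ω : PercSpace d M) (n : ℕ) :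
    approx d M ω n = ⋃ w ∈ retainedWords ω n, wordCube d M w := by
  simp only [approx, mem_retainedWords, mem_ofPred_eq]

lemma retained_append_singleton {ω : PercSpace d M} {w : List (Alpha d M)} {a : Alpha d M} :
    Retained d M ω (w ++ [a]) ↔ Retained d M ω w ∧ ω ⟨w ++ [a], by simp⟩ = true := by
  refine ⟨fun h => ⟨fun u hu hp => h u hu (hp.trans (w.prefix_append _)),
    h _ _ (List.prefix_refl _)⟩, fun ⟨hw, ha⟩ u hu hp => ?_⟩
  rcases List.prefix_concat_iff.mp hp with rfl | hp
  · exact ha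
  · exact hw u hu hp

/-- The nonempty words of length at most `n`. -/
def shortWords (d M n : ℕ) : Finset (Word d M) :=
  ((List.finite_length_le (Alpha d M) n).preimage Subtype.val_injective.injOn).toFinset

lemma mem_shortWords {n : ℕ} {w : Word d M} : w ∈ shortWords d M n ↔ w.1.length ≤ n :=
  Finite.mem_toFinset _

lemma dependsOn_retainedWords (n : ℕ) :
    DependsOn (fun ω : PercSpace d M => retainedWords ω n) (shortWords d M n) := by
  intro ω ω' h
  ext w
  simp only [mem_retainedWords]
  refine and_congr_right fun hlen => forall₃_congr fun u hu hp => ?_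
  rw [h _ (mem_shortWords.mpr (hp.length_le.trans hlen.le))]

/-- The word of the `a`-th subcube of the cube of the word `w`. -/
def childWord : List (Alpha d M) × Alpha d M ↪ Word d M where
  toFun x := ⟨x.1 ++ [x.2], by simp⟩
  inj' := fun ⟨w, a⟩ ⟨w', a'⟩ h => by simpa using congrArg Subtype.val h

/-- The words of the level-`n + 1` cubes contained in a retained level-`n` cube. -/
def children (ω : PercSpace d M) (n : ℕ) : Finset (Word d M) :=
  (retainedWords ω n ×ˢ Finset.univ).map childWord

lemma mem_children {ω : PercSpace d M} {n : ℕ} {u : Word d M} :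
    u ∈ children ω n ↔ ∃ w ∈ retainedWords ω n, ∃ a, childWord (w, a) = u := by
  simp [children]

lemma disjoint_shortWords_children (ω : PercSpace d M) (n : ℕ) :
    Disjoint (shortWords d M n) (children ω n) := by
  refine Finset.disjoint_left.mpr fun u hu hu' => ?_
  obtain ⟨w, hw, a, rfl⟩ := mem_children.mp hu'
  have hlen : (w ++ [a]).length ≤ n := mem_shortWords.mp hu
  rw [List.length_append, List.length_singleton, length_of_mem_retainedWords w hw] at hlen
  omega

lemma mem_retainedWords_succ {ω : PercSpace d M} {n : ℕ} {w : List (Alpha d M)} :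
    w ∈ retainedWords ω (n + 1) ↔ ∃ u ∈ children ω n, ω u = true ∧ u.1 = w := by
  simp only [mem_children, mem_retainedWords]
  constructor
  · rintro ⟨hlen, hw⟩
    obtain ⟨w, a, rfl⟩ : ∃ w' a, w = w' ++ [a] :=
      (List.eq_nil_or_concat' w).resolve_left (by rintro rfl; simp at hlen)
    obtain ⟨hw, ha⟩ := retained_append_singleton.mp hw
    exact ⟨_, ⟨w, ⟨by simpa using hlen, hw⟩, a, rfl⟩, ha, rfl⟩
  · rintro ⟨_, ⟨w, ⟨rfl, hw⟩, a, rfl⟩, ha, rfl⟩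
    exact ⟨List.length_append, retained_append_singleton.mpr ⟨hw, ha⟩⟩

lemma sum_retainedWords_succ (ω : PercSpace d M) (n : ℕ) (f : List (Alpha d M) → ℝ) :
    ∑ w ∈ retainedWords ω (n + 1), f w = ∑ u ∈ children ω n, if ω u then f u else 0 := by
  have retainedWords_succ : retainedWords ω (n + 1) =
      ((children ω n).filter (ω · = true)).map (Function.Embedding.subtype _) := by
    ext w
    simp only [mem_retainedWords_succ, Finset.mem_map, Finset.mem_filter, and_assoc,
      Function.Embedding.subtype_apply]
  rw [retainedWords_succ, Finset.sum_map, Finset.sum_filter]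
  rfl

end RetainedWords

section Slices

variable {d M : ℕ}

/-- `M ^ n` times the length of the chord cut out of the level-`n` cube of the word `w` of length
`n`. -/
def rescaledChord (z v : EuclideanSpace ℝ (Fin d)) (w : List (Alpha d M)) : ℝ :=
  (M : ℝ) ^ w.length * chordLength (wordCube d M w) z v

/-- `M ^ n * L_n(ℓ)` for the line `ℓ` through `z` with direction `v`. -/
def rescaledSlice (ω : PercSpace d M) (n : ℕ) (z v : EuclideanSpace ℝ (Fin d)) : ℝ :=
  (M : ℝ) ^ n * chordLength (approx d M ω n) z v

lemma dependsOn_rescaledSlice (n : ℕ) :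
    DependsOn (fun (ω : PercSpace d M) => rescaledSlice ω n) (shortWords d M n) := fun ω ω' h => by
  ext z v
  simp only [rescaledSlice, approx_eq_biUnion_retainedWords, dependsOn_retainedWords n h]

variable {ω : PercSpace d M} {n : ℕ} {z v z' v' : EuclideanSpace ℝ (Fin d)}

lemma rescaledChord_nonneg (w : List (Alpha d M)) : 0 ≤ rescaledChord z v w :=
  mul_nonneg (by positivity) measureReal_nonneg

variable (hM : 1 < M)
include hM

lemma rescaledChord_le (hv : ‖v‖ = 1) (w : List (Alpha d M)) : rescaledChord z v w ≤ √d := by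
  have hMw : (0 : ℝ) < (M : ℝ) ^ w.length := by positivity
  rw [rescaledChord, mul_comm, ← le_div_iff₀ hMw]
  exact chordLength_wordCube_le hM hv w

variable [NeZero d]

lemma sum_rescaledChord_append_singleton_le (hv : ∀ i, 0 < v i) (w : List (Alpha d M)) :
    ∑ a, rescaledChord z v (w ++ [a]) ≤ M * rescaledChord z v w := by
  simp only [rescaledChord, List.length_append, List.length_singleton, ← Finset.mul_sum]
  rw [pow_succ', mul_assoc]
  gcongr
  exact sum_chordLength_append_singleton_le hM hv w

lemma rescaledSlice_eq_sum (hv : ∀ i, 0 < v i) :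
    rescaledSlice ω n z v = ∑ w ∈ retainedWords ω n, rescaledChord z v w := by
  rw [rescaledSlice, approx_eq_biUnion_retainedWords,
    chordLength_biUnion_wordCube hM hv length_of_mem_retainedWords, Finset.mul_sum]
  refine Finset.sum_congr rfl fun w hw => ?_
  rw [rescaledChord, length_of_mem_retainedWords w hw]

lemma rescaledSlice_succ_eq_sum_children (hv : ∀ i, 0 < v i) :
    rescaledSlice ω (n + 1) z v =
      ∑ u ∈ children ω n, if ω u then rescaledChord z v u.1 else 0 := by
  rw [rescaledSlice_eq_sum hM hv, sum_retainedWords_succ]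

lemma sum_children_rescaledChord_le (hv : ∀ i, 0 < v i) :
    ∑ u ∈ children ω n, rescaledChord z v u.1 ≤ M * rescaledSlice ω n z v := by
  rw [rescaledSlice_eq_sum hM hv, Finset.mul_sum, children, Finset.sum_map, Finset.sum_product]
  exact Finset.sum_le_sum fun w _ => sum_rescaledChord_append_singleton_le hM hv w

lemma rescaledSlice_le_add {s : ℝ} (hs : 0 < s) (hv : ∀ i, s ≤ v i) (hv' : ∀ i, s ≤ v' i)
    (hz : ∀ i, |z i - z' i| ≤ ((M : ℝ) ^ (2 * n))⁻¹)
    (hvv' : ∀ i, |v i - v' i| ≤ ((M : ℝ) ^ (2 * n))⁻¹) (hz' : z' ∈ box 0 1) :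
    rescaledSlice ω n z v ≤ rescaledSlice ω n z' v' + 2 * d * (1 / s + 1 / s ^ 2) := by
  have hMn : (0 : ℝ) < (M : ℝ) ^ n := by positivity
  rw [rescaledSlice, rescaledSlice, approx_eq_biUnion_retainedWords,
    chordLength_biUnion_wordCube hM (fun i => hs.trans_le (hv i)) length_of_mem_retainedWords,
    chordLength_biUnion_wordCube hM (fun i => hs.trans_le (hv' i)) length_of_mem_retainedWords]
  refine (mul_le_mul_of_nonneg_left (sum_chordLength_le_add hM hs hv hv' hz hvv' hz'
    length_of_mem_retainedWords) hMn.le).trans_eq ?_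
  field_simp
  ring

end Slices

/-! ### One step of the percolation -/

/-- The exponential rate, per unit of rescaled slice length, at which one step of the percolation
is unlikely to exceed its mean by the relative amount `ε / 2`: for a slice of length `A` it comes
from Hoeffding's inequality with deviation `p * M * ε * A / 2` and sum of squares
`2 * √d * M * A`. -/
def decayRate (d M : ℕ) (p ε : ℝ) : ℝ :=
  p ^ 2 * ε ^ 2 * M / (4 * √d)

namespace IsBernoulliPerc

variable {d M n : ℕ} [NeZero d] {p ε : ℝ} {P : Measure (PercSpace d M)}
  {z v : EuclideanSpace ℝ (Fin d)}

lemma measureReal_sum_children_ge_le (hP : IsBernoulliPerc d M p P) (hM : 1 < M) (hp : 0 < p)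
    (hε : ε ∈ Ioc 0 6) (hv : ∀ i, 0 < v i) (hv1 : ‖v‖ = 1) {ω₀ : PercSpace d M} {A : ℝ} (hA : 0 < A)
    (hslice : rescaledSlice ω₀ n z v ≤ (1 + ε / 6) * A) :
    P.real {ω | p * M * (1 + 2 * ε / 3) * A ≤
      ∑ u ∈ children ω₀ n, if ω u then rescaledChord z v u.1 else 0} ≤
      Real.exp (-(decayRate d M p ε * A)) := by
  obtain ⟨hε0, hε6⟩ := hε
  have hd : (0 : ℝ) < √d := by
    have := NeZero.pos d
    positivity
  have sum_le : ∑ u ∈ children ω₀ n, rescaledChord z v u.1 ≤ M * ((1 + ε / 6) * A) :=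
    (sum_children_rescaledChord_le hM hv).trans (by gcongr)
  have sum_sq_le : ∑ u ∈ children ω₀ n, rescaledChord z v u.1 ^ 2 ≤ 2 * √d * M * A := by
    calc ∑ u ∈ children ω₀ n, rescaledChord z v u.1 ^ 2
        ≤ ∑ u ∈ children ω₀ n, √d * rescaledChord z v u.1 := by
          refine Finset.sum_le_sum fun u _ => ?_
          rw [sq]
          exact mul_le_mul_of_nonneg_right (rescaledChord_le hM hv1 _) (rescaledChord_nonneg _)
      _ ≤ √d * (M * ((1 + 1) * A)) := by
          rw [← Finset.mul_sum]
          refine mul_le_mul_of_nonneg_left (sum_le.trans ?_) hd.le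
          gcongr
          linarith
      _ = 2 * √d * M * A := by ring
  have mean_add_deviation_le :
      p * ∑ u ∈ children ω₀ n, rescaledChord z v u.1 + p * M * ε * A / 2 ≤
        p * M * (1 + 2 * ε / 3) * A := by
    linarith [mul_le_mul_of_nonneg_left sum_le hp.le]
  refine (hP.measureReal_weighted_sum_ge_le hp.le (fun u => rescaledChord_nonneg u.1)
    (by positivity) sum_sq_le (by positivity) mean_add_deviation_le).trans_eq ?_
  rw [decayRate]
  congr 1
  field_simp
  ring

lemma measure_lt_rescaledSlice_succ_le (hP : IsBernoulliPerc d M p P) (hM : 1 < M) (hp : 0 < p)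
    (hε : ε ∈ Ioc 0 6) (hv : ∀ i, 0 < v i) (hv1 : ‖v‖ = 1) {A : PercSpace d M → ℝ}
    (hA : DependsOn A (shortWords d M n)) {B : ℝ} (hB : 0 ≤ B)
    (hslice : ∀ ω, B < A ω → rescaledSlice ω n z v ≤ (1 + ε / 6) * A ω) :
    P {ω | B < A ω ∧ p * M * (1 + 2 * ε / 3) * A ω < rescaledSlice ω (n + 1) z v} ≤
      ENNReal.ofReal (Real.exp (-(decayRate d M p ε * B))) := by
  have := hP.1
  refine hP.measure_le_of_forall_cylinder (shortWords d M n) fun ω₀ => ?_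
  by_cases hA₀ : B < A ω₀
  · refine ⟨children ω₀ n, {ω | p * M * (1 + 2 * ε / 3) * A ω₀ ≤
      ∑ u ∈ children ω₀ n, if ω u then rescaledChord z v u.1 else 0},
      disjoint_shortWords_children ω₀ n, fun ω ω' h => ?_, ?_, fun ω hω h => ?_⟩
    · have sum_eq : (∑ u ∈ children ω₀ n, if ω u then rescaledChord z v u.1 else 0) =
          ∑ u ∈ children ω₀ n, if ω' u then rescaledChord z v u.1 else 0 :=
        Finset.sum_congr rfl fun u hu => by rw [h u hu]
      simp only [mem_ofPred_eq, sum_eq]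
    · rw [← ofReal_measureReal]
      refine ENNReal.ofReal_le_ofReal ((hP.measureReal_sum_children_ge_le hM hp hε hv hv1
        (hB.trans_lt hA₀) (hslice ω₀ hA₀)).trans ?_)
      have : 0 ≤ decayRate d M p ε := by
        rw [decayRate]
        positivity
      gcongr
    · have slice_succ_eq := rescaledSlice_succ_eq_sum_children (ω := ω) (n := n) (z := z) hM hv
      have retainedWords_eq : retainedWords ω n = retainedWords ω₀ n := dependsOn_retainedWords n h
      rw [children, retainedWords_eq, ← children] at slice_succ_eq
      rw [mem_ofPred_eq, ← slice_succ_eq, ← hA h]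
      exact hω.2.le
  · refine ⟨∅, ∅, Finset.disjoint_empty_right _, fun _ _ _ => rfl, by simp, fun ω hω h => ?_⟩
    exact hA₀ (hA h ▸ hω.1)

end IsBernoulliPerc

/-! ### Maximal slices along a sequence of nets of lines -/

/-- The lines, given by a point of the unit cube and a unit direction, whose directions have all
coordinates at least `s`. -/
def steepLines (d : ℕ) (s : ℝ) : Set (EuclideanSpace ℝ (Fin d) × EuclideanSpace ℝ (Fin d)) :=
  {ℓ | ℓ.1 ∈ box 0 1 ∧ ‖ℓ.2‖ = 1 ∧ ∀ i, s ≤ ℓ.2 i}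

/-- The maximum of `M ^ n * L_n(ℓ)` over the lines `ℓ` of the finite family `𝓛`. -/
def maxSlice {d M : ℕ} (ω : PercSpace d M) (n : ℕ)
    (𝓛 : Finset (EuclideanSpace ℝ (Fin d) × EuclideanSpace ℝ (Fin d))) : NNReal :=
  𝓛.sup fun ℓ => (rescaledSlice ω n ℓ.1 ℓ.2).toNNReal

section MaxSlice

variable {d M n : ℕ} {𝓛 𝓛' : Finset (EuclideanSpace ℝ (Fin d) × EuclideanSpace ℝ (Fin d))}

lemma dependsOn_maxSlice :
    DependsOn (fun ω : PercSpace d M => (maxSlice ω n 𝓛 : ℝ)) (shortWords d M n) :=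
  fun ω ω' h => by
    have rescaledSlice_eq : rescaledSlice ω n = rescaledSlice ω' n := dependsOn_rescaledSlice n h
    simp only [maxSlice, rescaledSlice_eq]

lemma lt_maxSlice_iff {ω : PercSpace d M} {c : ℝ} (hc : 0 ≤ c) :
    c < maxSlice ω n 𝓛 ↔ ∃ ℓ ∈ 𝓛, c < rescaledSlice ω n ℓ.1 ℓ.2 := by
  rw [← Real.toNNReal_lt_iff_lt_coe hc, maxSlice, Finset.lt_sup_iff]
  simp only [Real.toNNReal_lt_toNNReal_iff_of_nonneg hc]

lemma rescaledSlice_le_maxSlice {ω : PercSpace d M}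
    {ℓ : EuclideanSpace ℝ (Fin d) × EuclideanSpace ℝ (Fin d)} (hℓ : ℓ ∈ 𝓛) :
    rescaledSlice ω n ℓ.1 ℓ.2 ≤ maxSlice ω n 𝓛 :=
  le_of_not_gt fun h => lt_irrefl _ ((lt_maxSlice_iff (NNReal.coe_nonneg _)).mpr ⟨ℓ, hℓ, h⟩)

variable [NeZero d] {s : ℝ}

lemma rescaledSlice_le_maxSlice_add (hM : 1 < M) (hs : 0 < s) (h𝓛 : ↑𝓛 ⊆ steepLines d s)
    {ℓ : EuclideanSpace ℝ (Fin d) × EuclideanSpace ℝ (Fin d)} (hℓ : ℓ ∈ steepLines d s)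
    (hnear : ∃ ℓ' ∈ 𝓛, dist ℓ ℓ' ≤ ((M : ℝ) ^ (2 * n))⁻¹) (ω : PercSpace d M) :
    rescaledSlice ω n ℓ.1 ℓ.2 ≤ maxSlice ω n 𝓛 + 2 * d * (1 / s + 1 / s ^ 2) := by
  obtain ⟨ℓ', hℓ', hdist⟩ := hnear
  have coord_le (x y : EuclideanSpace ℝ (Fin d)) (i : Fin d) : |x i - y i| ≤ dist x y := by
    rw [dist_eq_norm]
    exact PiLp.norm_apply_le (x - y) i
  rw [Prod.dist_eq, max_le_iff] at hdist
  refine (rescaledSlice_le_add hM hs hℓ.2.2 (h𝓛 hℓ').2.2 (fun i => (coord_le _ _ i).trans hdist.1)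
    (fun i => (coord_le _ _ i).trans hdist.2) (h𝓛 hℓ').1).trans ?_
  gcongr
  exact rescaledSlice_le_maxSlice hℓ'

variable {p ε : ℝ} {P : Measure (PercSpace d M)}

namespace IsBernoulliPerc

lemma measure_lt_maxSlice_succ_le (hP : IsBernoulliPerc d M p P) (hM : 1 < M) (hp : 0 < p)
    (hε : ε ∈ Ioc 0 6) (hs : 0 < s) (h𝓛 : ↑𝓛 ⊆ steepLines d s) (h𝓛' : ↑𝓛' ⊆ steepLines d s)
    (hnet : ∀ ℓ ∈ 𝓛', ∃ ℓ' ∈ 𝓛, dist ℓ ℓ' ≤ ((M : ℝ) ^ (2 * n))⁻¹) {B : ℝ}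
    (hB : 2 * d * (1 / s + 1 / s ^ 2) ≤ ε / 6 * B) :
    P {ω | B < maxSlice ω n 𝓛 ∧
      p * M * (1 + 2 * ε / 3) * maxSlice ω n 𝓛 < maxSlice ω (n + 1) 𝓛'} ≤
      ENNReal.ofReal (𝓛'.card * Real.exp (-(decayRate d M p ε * B))) := by
  have hε0 := hε.1
  have hB0 : 0 ≤ B :=
    nonneg_of_mul_nonneg_right ((by positivity : (0 : ℝ) ≤ _).trans hB) (by positivity)
  have exceeding_line_exists : {ω : PercSpace d M | B < maxSlice ω n 𝓛 ∧
      p * M * (1 + 2 * ε / 3) * maxSlice ω n 𝓛 < maxSlice ω (n + 1) 𝓛'} ⊆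
      ⋃ ℓ ∈ 𝓛', {ω | B < maxSlice ω n 𝓛 ∧
        p * M * (1 + 2 * ε / 3) * maxSlice ω n 𝓛 < rescaledSlice ω (n + 1) ℓ.1 ℓ.2} := by
    rintro ω ⟨hA, hω⟩
    obtain ⟨ℓ, hℓ, hlt⟩ := (lt_maxSlice_iff (by positivity)).mp hω
    exact mem_biUnion hℓ ⟨hA, hlt⟩
  refine (measure_mono exceeding_line_exists).trans ((measure_biUnion_finset_le _ _).trans ?_)
  rw [ENNReal.ofReal_mul (by positivity), ENNReal.ofReal_natCast, ← nsmul_eq_mul]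
  refine Finset.sum_le_card_nsmul _ _ _ fun ℓ hℓ => ?_
  have hℓs := h𝓛' hℓ
  refine hP.measure_lt_rescaledSlice_succ_le hM hp hε (fun i => hs.trans_le (hℓs.2.2 i)) hℓs.2.1
    dependsOn_maxSlice hB0 fun ω hω => ?_
  calc rescaledSlice ω n ℓ.1 ℓ.2 ≤ maxSlice ω n 𝓛 + ε / 6 * B :=
        (rescaledSlice_le_maxSlice_add hM hs h𝓛 hℓs (hnet ℓ hℓ) ω).trans (by gcongr)
    _ ≤ maxSlice ω n 𝓛 + ε / 6 * maxSlice ω n 𝓛 := by gcongr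
    _ = (1 + ε / 6) * maxSlice ω n 𝓛 := by ring

theorem ae_eventually_maxSlice_le_or_succ_le (hP : IsBernoulliPerc d M p P) (hM : 1 < M)
    (hp : 0 < p) (hε : ε ∈ Ioc 0 6) (hs : 0 < s)
    {𝓛 : ℕ → Finset (EuclideanSpace ℝ (Fin d) × EuclideanSpace ℝ (Fin d))}
    (h𝓛 : ∀ n, ↑(𝓛 n) ⊆ steepLines d s)
    (hnet : ∀ n, ∀ ℓ ∈ 𝓛 (n + 1), ∃ ℓ' ∈ 𝓛 n, dist ℓ ℓ' ≤ ((M : ℝ) ^ (2 * n))⁻¹)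
    {b : ℕ → ℝ} (hb : Filter.Tendsto b Filter.atTop Filter.atTop)
    (hsum : Summable fun n => (𝓛 (n + 1)).card * Real.exp (-(decayRate d M p ε * b n))) :
    ∀ᵐ ω ∂P, ∀ᶠ n in Filter.atTop, (maxSlice ω n (𝓛 n) : ℝ) ≤ b n ∨
      (maxSlice ω (n + 1) (𝓛 (n + 1)) : ℝ) ≤
        p * M * (1 + 2 * ε / 3) * maxSlice ω n (𝓛 n) := by
  have discrepancy_le : ∀ᶠ n in Filter.atTop, 2 * d * (1 / s + 1 / s ^ 2) ≤ ε / 6 * b n :=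
    (hb.const_mul_atTop (by linarith [hε.1])).eventually_ge_atTop _
  filter_upwards [ae_eventually_notMem_of_eventually_le_ofReal hsum <| discrepancy_le.mono
    fun n => hP.measure_lt_maxSlice_succ_le hM hp hε hs (h𝓛 n) (h𝓛 (n + 1)) (hnet n)] with ω hω
  refine hω.mono fun n hn => ?_
  rwa [not_and_or, not_lt, not_lt] at hn

end IsBernoulliPerc

end MaxSlice

/-! ### Planar slices -/

section Planar

lemma norm_dirVec (α : ℝ) : ‖dirVec α‖ = 1 := by
  simp [EuclideanSpace.norm_eq, dirVec]

lemma dist_dirVec_le (α β : ℝ) : dist (dirVec α) (dirVec β) ≤ |α - β| := by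
  rw [EuclideanSpace.dist_eq, Real.sqrt_le_iff, sq_abs]
  refine ⟨abs_nonneg _, ?_⟩
  calc ∑ i, dist (dirVec α i) (dirVec β i) ^ 2
      = (cos α - cos β) ^ 2 + (sin α - sin β) ^ 2 := by
        simp [Fin.sum_univ_two, Real.dist_eq, dirVec]
    _ = 2 - 2 * cos (α - β) := by
        rw [cos_sub]
        linear_combination sin_sq_add_cos_sq α + sin_sq_add_cos_sq β
    _ ≤ (α - β) ^ 2 := by linarith [one_sub_sq_div_two_le_cos (x := α - β)]

lemma sin_le_dirVec_apply {θ α : ℝ} (hθ : 0 ≤ θ) (hα : α ∈ Ioo θ (π / 2 - θ)) (i : Fin 2) :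
    sin θ ≤ dirVec α i := by
  fin_cases i
  · calc sin θ ≤ sin (π / 2 - α) :=
          sin_le_sin_of_le_of_le_pi_div_two (by linarith [pi_pos]) (by linarith [hα.1])
            (by linarith [hα.2])
      _ = cos α := sin_pi_div_two_sub α
  · exact sin_le_sin_of_le_of_le_pi_div_two (by linarith [pi_pos]) (by linarith [hα.2]) hα.1.le

lemma diagSeg_subset_unitSquare : diagSeg ⊆ box 0 1 := by
  rintro z ⟨hz, hz0, hz1⟩ i
  fin_cases i
  · exact ⟨hz0, hz1⟩
  · constructor <;> simp <;> linarith

lemma inter_lineSeg_eq_inter_range {B : Set (EuclideanSpace ℝ (Fin 2))} (hB : B ⊆ box 0 1)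
    (z v : EuclideanSpace ℝ (Fin 2)) : B ∩ lineSeg z v = B ∩ range (lineParam z v) := by
  ext x
  exact and_congr_right fun hx =>
    ⟨fun ⟨⟨t, ht⟩, _⟩ => ⟨t, ht.symm⟩, fun ⟨t, ht⟩ => ⟨⟨t, ht.symm⟩, hB hx⟩⟩

lemma hausdorffMeasure_inter_lineSeg {B : Set (EuclideanSpace ℝ (Fin 2))} (hB : B ⊆ box 0 1)
    {z v : EuclideanSpace ℝ (Fin 2)} (hv : ∀ i, 0 < v i) (hv1 : ‖v‖ = 1) :
    μH[1] (B ∩ lineSeg z v) = ENNReal.ofReal (chordLength B z v) := by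
  have chord_finite : volume (lineParam z v ⁻¹' B) ≠ ∞ := by
    refine measure_ne_top_of_subset (preimage_mono hB) ?_
    rw [lineParam_preimage_box hv]
    exact measure_Icc_lt_top.ne
  rw [inter_lineSeg_eq_inter_range hB, hausdorffMeasure_inter_range_lineParam _ _ hv1, chordLength,
    ofReal_measureReal chord_finite]

lemma coe_maxSlice_eq_iSup {M : ℕ} (hM : 1 < M) (ω : PercSpace 2 M) (n : ℕ)
    {𝓛 : Finset (EuclideanSpace ℝ (Fin 2) × EuclideanSpace ℝ (Fin 2))} {s : ℝ} (hs : 0 < s)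
    (h𝓛 : ↑𝓛 ⊆ steepLines 2 s) :
    (maxSlice ω n 𝓛 : ℝ≥0∞) =
      ⨆ ℓ ∈ 𝓛, ENNReal.ofReal ((M : ℝ) ^ n) * μH[1] (approx 2 M ω n ∩ lineSeg ℓ.1 ℓ.2) := by
  have approx_subset : approx 2 M ω n ⊆ box 0 1 :=
    iUnion₂_subset fun w _ => wordCube_subset_unitCube hM w
  rw [maxSlice, ENNReal.coe_finset_sup, Finset.sup_eq_iSup]
  refine iSup_congr fun ℓ => iSup_congr fun hℓ => ?_
  obtain ⟨-, hℓ1, hℓs⟩ := h𝓛 hℓ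
  rw [hausdorffMeasure_inter_lineSeg approx_subset (fun i => hs.trans_le (hℓs i)) hℓ1,
    ← ENNReal.ofReal_mul (by positivity)]
  rfl

open Classical in
/-- The lines through a point of `D` at an angle in `A` with the `x`-axis. -/
def gridLines (D : Finset (EuclideanSpace ℝ (Fin 2))) (A : Finset ℝ) :
    Finset (EuclideanSpace ℝ (Fin 2) × EuclideanSpace ℝ (Fin 2)) :=
  D ×ˢ A.image dirVec

variable {D D' : Finset (EuclideanSpace ℝ (Fin 2))} {A A' : Finset ℝ}

lemma mem_gridLines {ℓ : EuclideanSpace ℝ (Fin 2) × EuclideanSpace ℝ (Fin 2)} :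
    ℓ ∈ gridLines D A ↔ ℓ.1 ∈ D ∧ ∃ α ∈ A, dirVec α = ℓ.2 := by
  simp [gridLines]

lemma gridLines_subset_steepLines (hD : ↑D ⊆ diagSeg) {θ : ℝ} (hθ : 0 ≤ θ)
    (hA : ↑A ⊆ Ioo θ (π / 2 - θ)) : ↑(gridLines D A) ⊆ steepLines 2 (sin θ) := by
  rintro ⟨z, _⟩ hℓ
  obtain ⟨hz, α, hα, rfl⟩ := mem_gridLines.mp hℓ
  exact ⟨diagSeg_subset_unitSquare (hD hz), norm_dirVec α, sin_le_dirVec_apply hθ (hA hα)⟩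

lemma exists_mem_gridLines_dist_le {η : ℝ} (hD : ∀ z ∈ D', ∃ z' ∈ D, dist z z' ≤ η)
    (hA : ∀ α ∈ A', ∃ β ∈ A, |α - β| ≤ η) :
    ∀ ℓ ∈ gridLines D' A', ∃ ℓ' ∈ gridLines D A, dist ℓ ℓ' ≤ η := by
  rintro ⟨z, _⟩ hℓ
  obtain ⟨hz, α, hα, rfl⟩ := mem_gridLines.mp hℓ
  obtain ⟨z', hz', hzz'⟩ := hD z hz
  obtain ⟨β, hβ, hαβ⟩ := hA α hα
  exact ⟨(z', dirVec β), mem_gridLines.mpr ⟨hz', β, hβ, rfl⟩,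
    max_le hzz' ((dist_dirVec_le α β).trans hαβ)⟩

lemma card_gridLines_le : (gridLines D A).card ≤ D.card * A.card := by
  rw [gridLines, Finset.card_product]
  exact Nat.mul_le_mul_left _ Finset.card_image_le

lemma iSup_gridLines (f : EuclideanSpace ℝ (Fin 2) → EuclideanSpace ℝ (Fin 2) → ℝ≥0∞) :
    ⨆ ℓ ∈ gridLines D A, f ℓ.1 ℓ.2 = ⨆ z ∈ D, ⨆ α ∈ A, f z (dirVec α) := by
  rw [← Finset.sup_eq_iSup, gridLines, Finset.sup_product_left]
  simp only [Finset.sup_eq_iSup, Finset.iSup_finset_image]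

lemma coe_maxSlice_gridLines {M : ℕ} (hM : 1 < M) (hD : ↑D ⊆ diagSeg) {θ : ℝ} (hθ : θ ∈ Ioo 0 π)
    (hA : ↑A ⊆ Ioo θ (π / 2 - θ)) (ω : PercSpace 2 M) (n : ℕ) :
    (maxSlice ω n (gridLines D A) : ℝ≥0∞) = ⨆ z ∈ D, ⨆ α ∈ A,
      ENNReal.ofReal ((M : ℝ) ^ n) * μH[1] (approx 2 M ω n ∩ lineSeg z (dirVec α)) := by
  rw [coe_maxSlice_eq_iSup hM ω n (sin_pos_of_mem_Ioo hθ)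
    (gridLines_subset_steepLines hD hθ.1.le hA)]
  exact iSup_gridLines fun z v =>
    ENNReal.ofReal ((M : ℝ) ^ n) * μH[1] (approx 2 M ω n ∩ lineSeg z v)

lemma summable_mul_exp_neg_decayRate {M : ℕ} (hM : 1 < M) {p ε : ℝ} (hp : 0 < p) (hε : 0 < ε)
    {b : ℕ → ℝ} (hb : ∀ n : ℕ, b n = 8 * Real.log M / (√2 * p ^ 2 * ε ^ 2 / 9) * n)
    {c : ℕ → ℕ} (hc : ∀ n, c n ≤ M ^ (4 * (n + 1))) :
    Summable fun n => (c (n + 1) : ℝ) * Real.exp (-(decayRate 2 M p ε * b (n + 1))) := by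
  have hM1 : (1 : ℝ) < M := mod_cast hM
  have exponent_eq (n : ℕ) :
      decayRate 2 M p ε * b (n + 1) = 9 * M * (Real.log M * (n + 1 : ℕ)) := by
    rw [decayRate, hb, Nat.cast_ofNat]
    field_simp
    rw [Real.sq_sqrt zero_le_two]
    norm_num
  have exp_le (n : ℕ) :
      Real.exp (-(decayRate 2 M p ε * b (n + 1))) ≤ ((M : ℝ) ^ (9 * (n + 1)))⁻¹ := by
    rw [exponent_eq, Real.exp_neg,
      ← Real.exp_log (by positivity : (0 : ℝ) < M ^ (9 * (n + 1))), Real.log_pow]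
    refine inv_anti₀ (Real.exp_pos _) (Real.exp_le_exp.mpr ?_)
    have : 0 ≤ Real.log M * (n + 1) := mul_nonneg (Real.log_nonneg hM1.le) (by positivity)
    push_cast
    nlinarith
  refine Summable.of_nonneg_of_le (fun n => by positivity) (fun n => ?_)
    (summable_geometric_of_lt_one (by positivity) (inv_lt_one_of_one_lt₀ hM1))
  calc (c (n + 1) : ℝ) * Real.exp (-(decayRate 2 M p ε * b (n + 1)))
      ≤ (M : ℝ) ^ (4 * (n + 2)) * ((M : ℝ) ^ (9 * (n + 1)))⁻¹ := by
        gcongr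
        · exact_mod_cast hc (n + 1)
        · exact exp_le n
    _ ≤ (M : ℝ)⁻¹ ^ n := by
        rw [inv_pow, ← div_eq_mul_inv, div_le_iff₀ (by positivity), inv_mul_eq_div,
          le_div_iff₀ (by positivity), ← pow_add]
        exact pow_le_pow_right₀ hM1.le (by omega)

theorem IsBernoulliPerc.ae_eventually_maxSlice_gridLines {M : ℕ} {p : ℝ}
    {P : Measure (PercSpace 2 M)} (hP : IsBernoulliPerc 2 M p P) (hM : 2 ≤ M) (hp : 0 < p)
    {θ : ℝ} (hθ : θ ∈ Ioo 0 π) {ε : ℝ} (hε : ε ∈ Ioc 0 6) {b : ℕ → ℝ}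
    (hb : ∀ n : ℕ, b n = 8 * Real.log M / (√2 * p ^ 2 * ε ^ 2 / 9) * n)
    {D : ℕ → Finset (EuclideanSpace ℝ (Fin 2))} (hDsub : ∀ n, ↑(D n) ⊆ diagSeg)
    (hDdense : ∀ n, ∀ x ∈ diagSeg, ∃ y ∈ D n, dist x y ≤ (M : ℝ) ^ (-(2 * n : ℤ)))
    (hDcard : ∀ n, (D n).card ≤ M ^ (2 * n))
    {A : ℕ → Finset ℝ} (hAsub : ∀ n, ↑(A n) ⊆ Ioo θ (π / 2 - θ))
    (hAdense : ∀ n, ∀ α ∈ Ioo θ (π / 2 - θ), ∃ β ∈ A n, |α - β| ≤ (M : ℝ) ^ (-(2 * n : ℤ)))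
    (hAcard : ∀ n, (A n).card ≤ M ^ (2 * n)) :
    ∀ᵐ ω ∂P, ∀ᶠ n in Filter.atTop,
      (maxSlice ω n (gridLines (D (n + 1)) (A (n + 1))) : ℝ) ≤ b (n + 1) ∨
      (maxSlice ω (n + 1) (gridLines (D (n + 2)) (A (n + 2))) : ℝ) ≤
        p * M * (1 + 2 * ε / 3) * maxSlice ω n (gridLines (D (n + 1)) (A (n + 1))) := by
  have hε0 := hε.1
  have hlogM : 0 < Real.log M := Real.log_pos (mod_cast hM)
  have mesh_le {n : ℕ} : (M : ℝ) ^ (-(2 * (n + 1 : ℕ) : ℤ)) ≤ ((M : ℝ) ^ (2 * n))⁻¹ := by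
    rw [← zpow_natCast, ← zpow_neg]
    exact zpow_le_zpow_right₀ (mod_cast one_le_two.trans hM) (by push_cast; linarith)
  have net (n : ℕ) : ∀ ℓ ∈ gridLines (D (n + 2)) (A (n + 2)),
      ∃ ℓ' ∈ gridLines (D (n + 1)) (A (n + 1)), dist ℓ ℓ' ≤ ((M : ℝ) ^ (2 * n))⁻¹ :=
    exists_mem_gridLines_dist_le
      (fun z hz => (hDdense _ z (hDsub _ hz)).imp fun _ h => ⟨h.1, h.2.trans mesh_le⟩)
      (fun α hα => (hAdense _ α (hAsub _ hα)).imp fun _ h => ⟨h.1, h.2.trans mesh_le⟩)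
  have card_le (n : ℕ) : (gridLines (D (n + 1)) (A (n + 1))).card ≤ M ^ (4 * (n + 1)) := by
    rw [show 4 * (n + 1) = 2 * (n + 1) + 2 * (n + 1) by ring, pow_add]
    exact card_gridLines_le.trans (Nat.mul_le_mul (hDcard _) (hAcard _))
  have b_tendsto : Filter.Tendsto (fun n => b (n + 1)) Filter.atTop Filter.atTop := by
    simp only [hb]
    exact (tendsto_natCast_atTop_atTop.comp (Filter.tendsto_add_atTop_nat 1)).const_mul_atTop
      (by positivity)
  exact hP.ae_eventually_maxSlice_le_or_succ_le hM hp hε (sin_pos_of_mem_Ioo hθ)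
    (𝓛 := fun n => gridLines (D (n + 1)) (A (n + 1)))
    (fun n => gridLines_subset_steepLines (hDsub _) hθ.1.le (hAsub _)) net b_tendsto
    (summable_mul_exp_neg_decayRate
      (c := fun n => (gridLines (D (n + 1)) (A (n + 1))).card) hM hp hε0 hb card_le)

end Planar

theorem rescaled_slice_max_dichotomy_general
    (M : ℕ) (hM : 2 ≤ M) (p : ℝ) (hp : 0 < p)
    (P : Measure (PercSpace 2 M)) (hP : IsBernoulliPerc 2 M p P)
    (θ : ℝ) (hθ : θ ∈ Set.Ioo 0 (π / 4)) (ε : ℝ) (hε : ε ∈ Set.Ioc 0 6)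
    (r lam : ℝ) (hr : r = Real.sqrt 2 * p ^ 2 * ε ^ 2 / 9)
    (hlam : lam = p * M * (1 + 2 * ε / 3))
    (b : ℕ → ℝ) (hb : ∀ n : ℕ, b n = 8 * Real.log M / r * n)
    (Δseq : ℕ → Set (EuclideanSpace ℝ (Fin 2)))
    (hΔsub : ∀ n, Δseq n ⊆ diagSeg)
    (hΔdense : ∀ n, ∀ x ∈ diagSeg, ∃ y ∈ Δseq n, dist x y ≤ (M : ℝ) ^ (-(2 * n : ℤ)))
    (hΔfin : ∀ n, (Δseq n).Finite) (hΔcard : ∀ n, (Δseq n).ncard ≤ M ^ (2 * n))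
    (Aseq : ℕ → Set ℝ)
    (hAsub : ∀ n, Aseq n ⊆ Set.Ioo θ (π / 2 - θ))
    (hAdense : ∀ n, ∀ α ∈ Set.Ioo θ (π / 2 - θ), ∃ β ∈ Aseq n, |α - β| ≤ (M : ℝ) ^ (-(2 * n : ℤ)))
    (hAfin : ∀ n, (Aseq n).Finite) (hAcard : ∀ n, (Aseq n).ncard ≤ M ^ (2 * n))
    (a : PercSpace 2 M → ℕ → ℝ≥0∞)
    (ha : ∀ ω n, a ω n = ⨆ z ∈ Δseq n, ⨆ α ∈ Aseq n,
        ENNReal.ofReal ((M : ℝ) ^ ((n : ℤ) - 1)) *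
          μH[1] (approx 2 M ω (n - 1) ∩ lineSeg z (dirVec α))) :
    ∀ᵐ ω ∂P, ∃ N₀ : ℕ, ∀ n ≥ N₀,
      a ω n ≤ ENNReal.ofReal (b n) ∨ a ω (n + 1) ≤ ENNReal.ofReal lam * a ω n := by
  subst hr hlam
  have hε0 := hε.1
  have hθπ : θ ∈ Ioo 0 π := ⟨hθ.1, by linarith [hθ.2, pi_pos]⟩
  lift Δseq to ℕ → Finset (EuclideanSpace ℝ (Fin 2)) using hΔfin
  lift Aseq to ℕ → Finset ℝ using hAfin
  simp only [ncard_coe_finset, Finset.mem_coe] at hΔcard hAcard hΔdense hAdense ha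
  have a_succ_eq (ω : PercSpace 2 M) (n : ℕ) :
      a ω (n + 1) = ENNReal.ofReal (maxSlice ω n (gridLines (Δseq (n + 1)) (Aseq (n + 1)))) := by
    rw [ha, ENNReal.ofReal_coe_nnreal, coe_maxSlice_gridLines hM (hΔsub _) hθπ (hAsub _),
      Nat.cast_add_one, add_sub_cancel_right, zpow_natCast, Nat.add_sub_cancel]
  filter_upwards [hP.ae_eventually_maxSlice_gridLines hM hp hθπ hε hb hΔsub hΔdense hΔcard hAsub
    hAdense hAcard] with ω hω
  rw [← Filter.eventually_atTop, ← Filter.map_add_atTop_eq_nat 1, Filter.eventually_map]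
  refine hω.mono fun n => Or.imp (fun h => ?_) fun h => ?_
  · rw [a_succ_eq]
    exact ENNReal.ofReal_le_ofReal h
  · rw [a_succ_eq, a_succ_eq, ← ENNReal.ofReal_mul (by positivity)]
    exact ENNReal.ofReal_le_ofReal h

/-- almost surely, eventually either `aₙ ≤ bₙ` or `aₙ₊₁ ≤ λ aₙ`,
where `aₙ` is the maximum over the discretized family `𝔏ₙ^θ` of the rescaled
slice lengths `M^{n-1} L_{n-1}(ℓ)`. -/
theorem rescaled_slice_max_dichotomy
    (M : ℕ) (hM : 2 ≤ M) (p : ℝ) (hp0 : ((M : ℝ))⁻¹ ^ 2 < p) (hp1 : p ≤ 1)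
    (P : Measure (PercSpace 2 M)) (hP : IsBernoulliPerc 2 M p P)
    (θ : ℝ) (hθ : θ ∈ Set.Ioo 0 (π / 4))
    (ε : ℝ) (hε : ε ∈ Set.Ioo 0 (min p (1 / 10))) (hMpε : (M : ℝ) * p * (1 + ε) < 1)
    (r lam : ℝ) (hr : r = Real.sqrt 2 * p ^ 2 * ε ^ 2 / 9)
    (hlam : lam = p * M * (1 + 2 * ε / 3))
    (b : ℕ → ℝ) (hb : ∀ n : ℕ, b n = 8 * Real.log M / r * n)
    (Δseq : ℕ → Set (EuclideanSpace ℝ (Fin 2)))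
    (hΔsub : ∀ n, Δseq n ⊆ diagSeg)
    (hΔmono : ∀ n, Δseq n ⊆ Δseq (n + 1))
    (hΔdense : ∀ n, ∀ x ∈ diagSeg, ∃ y ∈ Δseq n, dist x y ≤ (M : ℝ) ^ (-(2 * n : ℤ)))
    (hΔcard : ∀ n, (Δseq n).ncard = M ^ (2 * n))
    (Aseq : ℕ → Set ℝ)
    (hAsub : ∀ n, Aseq n ⊆ Set.Ioo θ (π / 2 - θ))
    (hAmono : ∀ n, Aseq n ⊆ Aseq (n + 1))
    (hAdense : ∀ n, ∀ α ∈ Set.Ioo θ (π / 2 - θ), ∃ β ∈ Aseq n, |α - β| ≤ (M : ℝ) ^ (-(2 * n : ℤ)))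
    (hAcard : ∀ n, (Aseq n).ncard = M ^ (2 * n))
    (a : PercSpace 2 M → ℕ → ℝ≥0∞)
    (ha : ∀ ω n, a ω n = ⨆ z ∈ Δseq n, ⨆ α ∈ Aseq n,
        ENNReal.ofReal ((M : ℝ) ^ ((n : ℤ) - 1)) *
          μH[1] (approx 2 M ω (n - 1) ∩ lineSeg z (dirVec α))) :
    ∀ᵐ ω ∂P, ∃ N₀ : ℕ, ∀ n ≥ N₀,
      a ω n ≤ ENNReal.ofReal (b n) ∨ a ω (n + 1) ≤ ENNReal.ofReal lam * a ω n :=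
  rescaled_slice_max_dichotomy_general M hM p ((sq_nonneg _).trans_lt hp0) P hP θ hθ ε
    ⟨hε.1, by linarith [hε.2.trans_le (min_le_right _ _)]⟩ r lam hr hlam b hb
    Δseq hΔsub hΔdense (fun n => finite_of_ncard_ne_zero (by rw [hΔcard]; positivity))
    (fun n => (hΔcard n).le)
    Aseq hAsub hAdense (fun n => finite_of_ncard_ne_zero (by rw [hAcard]; positivity))
    (fun n => (hAcard n).le) a ha
end
end

section
/- Let E = E(2,M,p) be a planar fractal percolation with p > M^{-2}. There exists a constant λ ∈ (0,1) (depending only on M and p) such that, conditioned on E ≠ ∅, almost surely there exists N₆ (depending on the realization) such that for every n > N₆ there exists a segment ℓ ∈ 𝔏 with #ℰ_n(ℓ) > λ·n. -/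
open MeasureTheory Set ENNReal ProbabilityTheory Real

noncomputable section

open Filter Topology

/-!
Call a level-`k` row full if all its `M ^ k` squares are retained. A nearly horizontal line crosses
every square of a row, so it suffices to find, for all large `n`, a full row of depth `k` inside
some retained square of level `n - k`, with `M ^ k` at least a fixed multiple of `n`.

Let `f s = (1 - p * (1 - s)) ^ M ^ 2` be the generating function of the number of retained children.
No retained square of level `m` carries a descendant tree in `S` with probability
`f^[m] (1 - P S)`; the choice `S = univ` gives the probability `f^[m] 0` that no square of level `m`
is retained. A row of depth `k` is full with probability at least `p ^ M ^ (k + 1)`, exponentially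
small in `n` but with a rate that can be made as small as we like. Since `f` is convex with
`f 1 = 1` and `f' 1 > 1`, its orbits first escape from `1` exponentially fast and are then
contracted, so `f^[m] (1 - P S) - f^[m] 0` decays exponentially in `n` even for this `S`, and the
Borel–Cantelli lemma applies.
-/

section ConvexIteration

variable {f : ℝ → ℝ} {a b c r y : ℝ}

theorem exists_lt_self_of_one_lt_deriv {f' : ℝ} (hab : a < b)
    (hf : HasDerivWithinAt f f' (Iio b) b) (hf' : 1 < f') (hb : f b = b) :
    ∃ z ∈ Ioo a b, f z < z := by
  have hslope : ∀ᶠ z in 𝓝[<] b, 1 < slope f b z :=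
    ((hasDerivWithinAt_iff_tendsto_slope' self_notMem_Iio).1 hf).eventually_const_lt hf'
  obtain ⟨z, hz, hzab⟩ := (hslope.and (Ioo_mem_nhdsLT hab)).exists
  refine ⟨z, hzab, ?_⟩
  rw [slope_def_field, hb, one_lt_div_of_neg (sub_neg.2 hzab.2)] at hz
  linarith

/-- Choose `y` with `f y - y = (f z - z) / 2`. Then the secant slope between `y` and `z` is below
`1`, and by convexity it dominates all slopes on `[a, y]`. -/
theorem exists_contraction_of_convexOn {z : ℝ} (hconv : ConvexOn ℝ (Icc a z) f)
    (hcont : ContinuousOn f (Icc a z)) (hmono : MonotoneOn f (Icc a z)) (ha : a ≤ f a)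
    (haz : a ≤ z) (hz : f z < z) :
    ∃ y ∈ Ico a z, f y < y ∧ ∃ r ∈ Ico (0 : ℝ) 1,
      ∀ u ∈ Icc a y, ∀ v ∈ Icc a y, u ≤ v → f v - f u ≤ r * (v - u) := by
  obtain ⟨y, ⟨hay, hyz⟩, hy⟩ : ∃ y ∈ Icc a z, f y - y = (f z - z) / 2 :=
    intermediate_value_Icc' (f := fun x ↦ f x - x) haz (hcont.sub continuousOn_id)
      ⟨by linarith, by linarith⟩
  have hyz : y < z := hyz.lt_of_ne (by rintro rfl; linarith)
  have hz_mem : z ∈ Icc a z := right_mem_Icc.2 haz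
  refine ⟨y, ⟨hay, hyz⟩, by linarith, (f z - f y) / (z - y),
    ⟨div_nonneg (sub_nonneg.2 (hmono ⟨hay, hyz.le⟩ hz_mem hyz.le)) (by linarith),
      (div_lt_one (by linarith)).2 (by linarith)⟩, fun u hu v hv huv ↦ ?_⟩
  rcases huv.eq_or_lt with rfl | huv
  · simp
  have hu_mem : u ∈ Icc a z := ⟨hu.1, hu.2.trans hyz.le⟩
  have hv_mem : v ∈ Icc a z := ⟨hv.1, hv.2.trans hyz.le⟩
  rw [← div_le_iff₀ (sub_pos.2 huv)]
  calc (f v - f u) / (v - u) ≤ (f z - f v) / (z - v) :=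
        hconv.slope_mono_adjacent hu_mem hz_mem huv (hv.2.trans_lt hyz)
    _ = (f v - f z) / (v - z) := by rw [← neg_div_neg_eq, neg_sub, neg_sub]
    _ ≤ (f y - f z) / (y - z) :=
        hconv.secant_mono hz_mem hv_mem ⟨hay, hyz.le⟩ (hv.2.trans_lt hyz).ne hyz.ne hv.2
    _ = (f z - f y) / (z - y) := by rw [← neg_div_neg_eq, neg_sub, neg_sub]

theorem monotoneOn_iterate {s : Set ℝ} (hmaps : MapsTo f s s) (hmono : MonotoneOn f s) (j : ℕ) :
    MonotoneOn f^[j] s := by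
  induction j with
  | zero => exact monotoneOn_id
  | succ j ih => exact ih.comp hmono hmaps

theorem iterate_sub_iterate_le {s : Set ℝ} (hmaps : MapsTo f s s) (hmono : MonotoneOn f s)
    (hr : 0 ≤ r) (hf : ∀ u ∈ s, ∀ v ∈ s, u ≤ v → f v - f u ≤ r * (v - u)) {u v : ℝ}
    (hu : u ∈ s) (hv : v ∈ s) (huv : u ≤ v) (i : ℕ) :
    f^[i] v - f^[i] u ≤ r ^ i * (v - u) := by
  induction i generalizing u v with
  | zero => simp
  | succ i ih =>
    calc f^[i] (f v) - f^[i] (f u) ≤ r ^ i * (f v - f u) :=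
          ih (hmaps hu) (hmaps hv) (hmono hu hv huv)
      _ ≤ r ^ i * (r * (v - u)) := by gcongr; exact hf u hu v hv huv
      _ = r ^ (i + 1) * (v - u) := by ring

theorem mul_sub_le_sub_of_convexOn (hconv : ConvexOn ℝ (Icc y b) f) (hyb : y < b) (hb : f b = b) :
    ∀ x ∈ Icc y b, (b - f y) / (b - y) * (b - x) ≤ b - f x := by
  rintro x ⟨hyx, hxb⟩
  rcases hxb.eq_or_lt with rfl | hxb
  · simp [hb]
  have hsecant := hconv.secant_mono (right_mem_Icc.2 hyb.le) (left_mem_Icc.2 hyb.le)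
    ⟨hyx, hxb.le⟩ hyb.ne hxb.ne hyx
  rwa [hb, ← neg_div_neg_eq, neg_sub, neg_sub, ← neg_div_neg_eq (f x - b), neg_sub, neg_sub,
    le_div_iff₀ (sub_pos.2 hxb)] at hsecant

theorem iterate_mem_Icc_of_le_pow_mul (hmaps : MapsTo f (Icc a b) (Icc a b))
    (hmaps_y : MapsTo f (Icc a y) (Icc a y)) (hc : 0 ≤ c)
    (hexp : ∀ x ∈ Icc y b, c * (b - x) ≤ b - f x) {x : ℝ} (hx : x ∈ Icc a b) {j : ℕ}
    (hj : b - y ≤ c ^ j * (b - x)) : f^[j] x ∈ Icc a y := by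
  induction j generalizing x with
  | zero => exact ⟨hx.1, by rw [pow_zero, one_mul] at hj; exact (sub_le_sub_iff_left b).1 hj⟩
  | succ j ih =>
    rcases le_total x y with hxy | hyx
    · exact hmaps_y.iterate (j + 1) ⟨hx.1, hxy⟩
    · refine ih (hmaps hx) ?_
      calc b - y ≤ c ^ (j + 1) * (b - x) := hj
        _ = c ^ j * (c * (b - x)) := by ring
        _ ≤ c ^ j * (b - f x) := by gcongr; exact hexp x ⟨hyx, hx.2⟩

/-- Near the repelling fixed point `1` the distance to `1` grows by a factor `c`, so an orbit
starting at `x` needs about `log (1 / (1 - x))` steps to reach the region where `f` contracts. -/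
theorem exists_iterate_sub_iterate_zero_le {f' : ℝ} (hconv : ConvexOn ℝ (Icc 0 1) f)
    (hcont : ContinuousOn f (Icc 0 1)) (hmono : MonotoneOn f (Icc 0 1)) (h0 : 0 ≤ f 0)
    (h1 : f 1 = 1) (hderiv : HasDerivWithinAt f f' (Iio 1) 1) (hf' : 1 < f') :
    ∃ c > 1, ∃ r ∈ Ico (0 : ℝ) 1, ∀ x ∈ Icc (0 : ℝ) 1, ∀ i j : ℕ, 1 ≤ c ^ j * (1 - x) →
      f^[i + j] x - f^[i + j] 0 ≤ r ^ i := by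
  obtain ⟨z, ⟨hz0, hz1⟩, hz⟩ := exists_lt_self_of_one_lt_deriv one_pos hderiv hf' h1
  have hz_sub : Icc 0 z ⊆ Icc 0 1 := Icc_subset_Icc_right hz1.le
  obtain ⟨y, ⟨hy0, hyz⟩, hy, r, hr, hcontr⟩ := exists_contraction_of_convexOn
    (hconv.subset hz_sub (convex_Icc 0 z)) (hcont.mono hz_sub) (hmono.mono hz_sub) h0 hz0.le hz
  have hy1 : y < 1 := hyz.trans hz1
  have hy_sub : Icc 0 y ⊆ Icc 0 1 := Icc_subset_Icc_right hy1.le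
  have maps_of_le {t : ℝ} (ht : t ∈ Icc (0 : ℝ) 1) (hft : f t ≤ t) :
      MapsTo f (Icc 0 t) (Icc 0 t) := fun x hx ↦
    have hx' : x ∈ Icc (0 : ℝ) 1 := ⟨hx.1, hx.2.trans ht.2⟩
    ⟨h0.trans (hmono (by simp) hx' hx.1), (hmono hx' ht hx.2).trans hft⟩
  have hmaps := maps_of_le (right_mem_Icc.2 zero_le_one) h1.le
  have hmaps_y := maps_of_le ⟨hy0, hy1.le⟩ hy.le
  have hc : 1 < (1 - f y) / (1 - y) := (one_lt_div (by linarith)).2 (by linarith)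
  refine ⟨_, hc, r, hr, fun x hx i j hj ↦ ?_⟩
  have hexp := mul_sub_le_sub_of_convexOn (hconv.subset (Icc_subset_Icc_left hy0)
    (convex_Icc y 1)) hy1 h1
  have hxy := iterate_mem_Icc_of_le_pow_mul hmaps hmaps_y (by linarith) hexp hx (j := j)
    (by linarith)
  have h0y : f^[j] 0 ∈ Icc 0 y := hmaps_y.iterate j ⟨le_rfl, hy0⟩
  have hle : f^[j] 0 ≤ f^[j] x :=
    monotoneOn_iterate hmaps hmono j (left_mem_Icc.2 zero_le_one) hx hx.1
  rw [Function.iterate_add_apply, Function.iterate_add_apply]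
  calc f^[i] (f^[j] x) - f^[i] (f^[j] 0) ≤ r ^ i * (f^[j] x - f^[j] 0) :=
        iterate_sub_iterate_le hmaps_y (hmono.mono hy_sub) hr.1 hcontr h0y hxy hle i
    _ ≤ r ^ i * 1 := by gcongr; exacts [pow_nonneg hr.1 i, by linarith [hxy.2, h0y.1]]
    _ = r ^ i := mul_one _

end ConvexIteration

/-- The probability generating function of the binomial distribution with parameters `N` and `p`,
that is, of the number of retained children of a retained cube. -/
def offspringPGF (p : ℝ) (N : ℕ) (s : ℝ) : ℝ := (1 - p * (1 - s)) ^ N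

theorem exists_offspringPGF_iterate_sub_le {p : ℝ} {N : ℕ} (hp0 : 0 ≤ p) (hp1 : p ≤ 1)
    (hN : 1 < p * N) :
    ∃ c > 1, ∃ r ∈ Ico (0 : ℝ) 1, ∀ x ∈ Icc (0 : ℝ) 1, ∀ i j : ℕ, 1 ≤ c ^ j * (1 - x) →
      (offspringPGF p N)^[i + j] x - (offspringPGF p N)^[i + j] 0 ≤ r ^ i := by
  have base_nonneg : ∀ s ∈ Icc (0 : ℝ) 1, 0 ≤ 1 - p * (1 - s) := fun s hs ↦ by
    nlinarith [hs.1, hs.2]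
  have hconv : ConvexOn ℝ (Icc 0 1) (offspringPGF p N) := by
    have haffine : ConvexOn ℝ (Icc (0 : ℝ) 1) fun s ↦ 1 - p * (1 - s) :=
      ⟨convex_Icc 0 1, fun x _ y _ α β _ _ hαβ ↦ by
        simp only [smul_eq_mul]
        linear_combination (p - 1) * hαβ⟩
    exact haffine.pow (fun s hs ↦ base_nonneg s hs) N
  have hmono : MonotoneOn (offspringPGF p N) (Icc 0 1) := fun s hs t _ hst ↦
    pow_le_pow_left₀ (base_nonneg s hs) (by gcongr) N
  have hderiv : HasDerivAt (offspringPGF p N) (p * N) 1 := by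
    have haffine : HasDerivAt (fun s : ℝ ↦ 1 - p * (1 - s)) p 1 := by
      simpa using (((hasDerivAt_id (1 : ℝ)).const_sub 1).const_mul p).const_sub 1
    unfold offspringPGF
    simpa [mul_comm] using haffine.fun_pow N
  exact exists_iterate_sub_iterate_zero_le hconv
    (by unfold offspringPGF; fun_prop) hmono (pow_nonneg (base_nonneg 0 (by simp)) N)
    (by simp [offspringPGF]) hderiv.hasDerivWithinAt hN

theorem exists_lt_mul_pow_le {M L n : ℕ} (hM : 1 < M) (hL : 0 < L) (hLn : L ≤ n) :
    ∃ k, n < L * M ^ k ∧ L * M ^ k ≤ M * n := by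
  refine ⟨Nat.log M (n / L) + 1, ?_, ?_⟩
  · rw [mul_comm, ← Nat.div_lt_iff_lt_mul hL]
    exact Nat.lt_pow_succ_log_self hM _
  · calc L * M ^ (Nat.log M (n / L) + 1) = M * (M ^ Nat.log M (n / L) * L) := by ring
      _ ≤ M * (n / L * L) := by
        gcongr
        exact Nat.pow_log_le_self M (Nat.div_pos hLn hL).ne'
      _ ≤ M * n := by gcongr; exact Nat.div_mul_le_self n L

/-- With `L = 2 * M * (q * M + 1)`, the scale `k` is chosen so that `M ^ k` is a small multiple of
`n`; then `k` and `q * M ^ (k + 1)` together use up at most half of `n`. -/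
theorem exists_scale {M : ℕ} (hM : 1 < M) (q : ℕ) :
    ∃ L > 1, ∀ n ≥ L, ∃ i k, i + q * M ^ (k + 1) + k = n ∧ n < L * M ^ k ∧ n ≤ 2 * i := by
  refine ⟨M * (2 * (q * M + 1)), one_lt_mul_of_lt_of_le hM (by lia), fun n hn ↦ ?_⟩
  obtain ⟨k, hlt, hle⟩ := exists_lt_mul_pow_le hM (by positivity) hn
  have hhalf : 2 * (q * M ^ (k + 1) + M ^ k) ≤ n :=
    le_of_mul_le_mul_left (hle.trans_eq' (by ring)) (by lia)
  have hk : k < M ^ k := Nat.lt_pow_self hM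
  exact ⟨n - (q * M ^ (k + 1) + k), k, by lia, hlt, by lia⟩

theorem ae_eventually_notMem_of_measureReal_le_pow {Ω : Type*} {_mΩ : MeasurableSpace Ω}
    {μ : Measure Ω} [IsFiniteMeasure μ] {A : ℕ → Set Ω} {r : ℝ} (hr0 : 0 ≤ r) (hr1 : r < 1)
    (hA : ∀ᶠ n in atTop, μ.real (A n) ≤ r ^ n) : ∀ᵐ ω ∂μ, ∀ᶠ n in atTop, ω ∉ A n := by
  have hsum : Summable fun n ↦ μ.real (A n) :=
    (summable_geometric_of_lt_one hr0 hr1).of_norm_bounded_eventually_nat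
      (hA.mono fun n hn ↦ by rwa [Real.norm_of_nonneg measureReal_nonneg])
  refine ae_eventually_notMem ?_
  simpa using hsum.tsum_ofReal_ne_top

theorem ae_cond_of_subset {Ω : Type*} {_mΩ : MeasurableSpace Ω} {μ : Measure Ω}
    {s t : Set Ω} {q : Ω → Prop} (hst : s ⊆ t) (ht : MeasurableSet t)
    (h : ∀ᵐ ω ∂μ, ω ∈ t → q ω) : ∀ᵐ ω ∂cond μ s, q ω := by
  have ht_ae : ∀ᵐ ω ∂μ.restrict s, ω ∈ t :=
    ae_restrict_of_ae_restrict_of_subset hst (ae_restrict_mem ht)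
  refine Measure.ae_smul_measure ?_ _
  filter_upwards [ht_ae, ae_restrict_of_ae h] with ω hω hq using hq hω

section Grouping

variable {ι κ Ω : Type*} {_mΩ : MeasurableSpace Ω} {μ : Measure Ω} {𝓧 : ι → Type*}
  [∀ i, MeasurableSpace (𝓧 i)] {X : ∀ i, Ω → 𝓧 i}

theorem iIndepFun_restrict_fiber (hX : ∀ i, Measurable (X i)) (hindep : iIndepFun X μ)
    (g : ι → κ) : iIndepFun (fun k ω (i : {i // g i = k}) ↦ X i ω) μ := by
  have := hindep.isProbabilityMeasure
  have (i : ι) : IsProbabilityMeasure (μ.map (X i)) :=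
    Measure.isProbabilityMeasure_map (hX i).aemeasurable
  have fiber_law (k : κ) : μ.map (fun ω (i : {i // g i = k}) ↦ X i ω) =
      Measure.infinitePi fun i : {i // g i = k} ↦ μ.map (X i) :=
    (hindep.precomp Subtype.val_injective).map_fun_eq_infinitePi_map fun _ ↦ hX _
  have hinj : Function.Injective fun q : (k : κ) × {i // g i = k} ↦ (q.2 : ι) :=
    (Equiv.sigmaFiberEquiv g).injective
  rw [iIndepFun_iff_map_fun_eq_infinitePi_map (by fun_prop)]
  simp only [fiber_law]
  rw [← Measure.infinitePi_map_piCurry fun k (i : {i // g i = k}) ↦ μ.map (X i),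
    ← (hindep.precomp hinj).map_fun_eq_infinitePi_map fun _ ↦ hX _,
    Measure.map_map (by fun_prop) (by fun_prop)]
  rfl

end Grouping

section Percolation

variable {d M : ℕ} {p : unitInterval} {P : Measure (PercSpace d M)} {ω : PercSpace d M}
  {S : Set (PercSpace d M)} {m : ℕ}

theorem IsBernoulliPerc.eq_infinitePi (hP : IsBernoulliPerc d M p P) :
    P = Measure.infinitePi fun _ ↦ bernoulliMeasure true false p := by
  have := hP.1
  refine (Measure.isProjectiveLimit_infinitePi _).unique (fun I ↦ ?_) |>.symm
  refine Measure.ext_of_singleton fun x ↦ ?_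
  classical
  let b : Word d M → Bool := fun w ↦ if h : w ∈ I then x ⟨w, h⟩ else true
  have hcylinder : I.restrict ⁻¹' ({x} : Set (I → Bool)) =
      {ω : PercSpace d M | ∀ w ∈ I, ω w = b w} := by
    ext ω
    simp +contextual [funext_iff, b]
  rw [Measure.map_apply (by fun_prop) (measurableSet_singleton x), Measure.pi_singleton,
    hcylinder, hP.2 I b, ← Finset.prod_coe_sort]
  refine Finset.prod_congr rfl fun w _ ↦ ?_
  cases hx : x w
  · simpa [b, hx] using
      ENNReal.ofReal_coe_nnreal (p := unitInterval.toNNReal (unitInterval.symm p))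
  · simpa [b, hx] using ENNReal.ofReal_coe_nnreal (p := unitInterval.toNNReal p)

/-- The label of the level-one cube `a`. -/
def childLabel (a : Alpha d M) (ω : PercSpace d M) : Bool := ω ⟨[a], List.cons_ne_nil a []⟩

/-- The labeling of the tree of descendants of the cube `w`, reindexed as if `w` were the root. -/
def subtree (w : List (Alpha d M)) (ω : PercSpace d M) : PercSpace d M :=
  fun u ↦ ω ⟨w ++ u.1, List.append_ne_nil_of_right_ne_nil w u.2⟩

@[fun_prop]
theorem measurable_childLabel (a : Alpha d M) : Measurable (childLabel a) :=
  measurable_pi_apply _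

@[fun_prop]
theorem measurable_subtree (w : List (Alpha d M)) : Measurable (subtree w) :=
  measurable_pi_lambda _ fun _ ↦ measurable_pi_apply _

theorem subtree_nil (ω : PercSpace d M) : subtree [] ω = ω := rfl

theorem subtree_append (v w : List (Alpha d M)) (ω : PercSpace d M) :
    subtree (v ++ w) ω = subtree w (subtree v ω) :=
  funext fun u ↦ congrArg ω (Subtype.ext (List.append_assoc v w u.1))

theorem retained_nil (ω : PercSpace d M) : Retained d M ω [] :=
  fun _ hu hprefix ↦ (hu (List.prefix_nil.1 hprefix)).elim

theorem retained_append {v w : List (Alpha d M)} :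
    Retained d M ω (v ++ w) ↔ Retained d M ω v ∧ Retained d M (subtree v ω) w := by
  refine ⟨fun h ↦ ⟨fun u hu hprefix ↦ h u hu (hprefix.trans (List.prefix_append v w)),
    fun u hu hprefix ↦ h _ _ ((List.prefix_append_right_inj v).2 hprefix)⟩, ?_⟩
  rintro ⟨hv, hw⟩ u hu hprefix
  rcases List.prefix_or_prefix_of_prefix hprefix (List.prefix_append v w) with huv | ⟨t, rfl⟩
  · exact hv u hu huv
  · rcases eq_or_ne t [] with rfl | ht
    · exact hv _ hu (by rw [List.append_nil])
    · exact hw t ht ((List.prefix_append_right_inj v).1 hprefix)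

theorem retained_singleton {a : Alpha d M} : Retained d M ω [a] ↔ childLabel a ω = true := by
  refine ⟨fun h ↦ h [a] _ List.prefix_rfl, fun h u hu hprefix ↦ ?_⟩
  obtain rfl : u = [a] :=
    (List.prefix_cons_iff.1 hprefix).elim (fun h ↦ (hu h).elim) fun ⟨t, ht, h⟩ ↦ by
    rw [ht, List.prefix_nil.1 h]
  exact h

theorem retained_cons {a : Alpha d M} {w : List (Alpha d M)} :
    Retained d M ω (a :: w) ↔ childLabel a ω = true ∧ Retained d M (subtree [a] ω) w := by
  rw [← List.singleton_append, retained_append, retained_singleton]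

theorem IsBernoulliPerc.iIndepFun_label (hP : IsBernoulliPerc d M p P) :
    iIndepFun (fun w ω ↦ ω w) P := by
  rw [hP.eq_infinitePi]
  exact iIndepFun_infinitePi (X := fun _ b ↦ b) fun _ ↦ measurable_id

theorem IsBernoulliPerc.measureReal_childLabel (hP : IsBernoulliPerc d M p P) (a : Alpha d M) :
    P.real {ω | childLabel a ω = true} = p := by
  have h := hP.2 {⟨[a], List.cons_ne_nil a []⟩} fun _ ↦ true
  simp only [Finset.mem_singleton, forall_eq, Finset.prod_singleton, if_true] at h
  exact (congrArg ENNReal.toReal h).trans (ENNReal.toReal_ofReal p.2.1)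

theorem IsBernoulliPerc.map_subtree (hP : IsBernoulliPerc d M p P) (w : List (Alpha d M)) :
    P.map (subtree w) = P := by
  rw [hP.eq_infinitePi]
  exact Measure.map_infinitePi_infinitePi_of_inj
    (P := fun _ : Word d M ↦ bernoulliMeasure true false p)
    fun u v huv ↦ Subtype.ext (List.append_cancel_left (congrArg Subtype.val huv))

theorem IsBernoulliPerc.indepFun_childLabel_subtree (hP : IsBernoulliPerc d M p P)
    (a : Alpha d M) : IndepFun (childLabel a) (subtree [a]) P := by
  have hfibers := iIndepFun_restrict_fiber measurable_pi_apply hP.iIndepFun_label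
    fun w : Word d M ↦ decide (w.1.length = 1)
  refine (hfibers.indepFun Bool.false_ne_true.symm).comp
    (φ := fun x ↦ x ⟨⟨[a], List.cons_ne_nil a []⟩, decide_eq_true rfl⟩)
    (ψ := fun x (u : Word d M) ↦ x ⟨⟨[a] ++ u.1, List.cons_ne_nil a u.1⟩,
      decide_eq_false (by simp [u.2])⟩) ?_ ?_
  · exact measurable_pi_apply _
  · exact measurable_pi_lambda _ fun _ ↦ measurable_pi_apply _

theorem IsBernoulliPerc.iIndepFun_childLabel_subtree (hP : IsBernoulliPerc d M p P) :
    iIndepFun (fun a ω ↦ (childLabel a ω, subtree [a] ω)) P := by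
  have hfibers := iIndepFun_restrict_fiber measurable_pi_apply hP.iIndepFun_label
    fun w : Word d M ↦ w.1.head w.2
  exact hfibers.comp (fun a x ↦ (x ⟨⟨[a], List.cons_ne_nil a []⟩, rfl⟩,
    fun u : Word d M ↦ x ⟨⟨[a] ++ u.1, List.cons_ne_nil a u.1⟩, rfl⟩)) fun a ↦ by fun_prop

theorem IsBernoulliPerc.measureReal_childLabel_imp (hP : IsBernoulliPerc d M p P)
    (hS : MeasurableSet S) (a : Alpha d M) :
    P.real {ω | childLabel a ω = true → subtree [a] ω ∈ S} = 1 - p * (1 - P.real S) := by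
  have := hP.1
  have hcompl : {ω | childLabel a ω = true → subtree [a] ω ∈ S} =
      (childLabel a ⁻¹' {true} ∩ subtree [a] ⁻¹' Sᶜ)ᶜ := by
    ext ω
    simp
  have hsubtree : P.real (subtree [a] ⁻¹' Sᶜ) = 1 - P.real S := by
    rw [← map_measureReal_apply (measurable_subtree [a]) hS.compl, hP.map_subtree,
      probReal_compl_eq_one_sub hS]
  have hinter := (hP.indepFun_childLabel_subtree a).measure_inter_preimage_eq_mul {true} Sᶜ
    .of_discrete hS.compl
  rw [hcompl, probReal_compl_eq_one_sub (by measurability), measureReal_def, hinter,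
    ENNReal.toReal_mul, ← measureReal_def, ← measureReal_def, hsubtree]
  exact congrArg (fun t ↦ 1 - t * _) (hP.measureReal_childLabel a)

theorem IsBernoulliPerc.measureReal_forall_childLabel_imp (hP : IsBernoulliPerc d M p P)
    (hS : MeasurableSet S) :
    P.real {ω | ∀ a, childLabel a ω = true → subtree [a] ω ∈ S} =
      offspringPGF p (M ^ d) (P.real S) := by
  let T : Set (Bool × PercSpace d M) := {x | x.1 = true → x.2 ∈ S}
  have hT : MeasurableSet T :=
    (measurable_fst (measurableSet_singleton true)).imp (measurable_snd hS)
  have hinter : {ω | ∀ a, childLabel a ω = true → subtree [a] ω ∈ S} =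
      ⋂ a ∈ Finset.univ, (fun ω ↦ (childLabel a ω, subtree [a] ω)) ⁻¹' T := by
    ext ω
    simp [T]
  rw [hinter, measureReal_def, hP.iIndepFun_childLabel_subtree.measure_inter_preimage_eq_mul
    Finset.univ fun _ _ ↦ hT, ENNReal.toReal_prod]
  calc ∏ a : Alpha d M, P.real {ω | childLabel a ω = true → subtree [a] ω ∈ S}
      = ∏ _a : Alpha d M, (1 - p * (1 - P.real S)) :=
        Finset.prod_congr rfl fun a _ ↦ hP.measureReal_childLabel_imp hS a
    _ = offspringPGF p (M ^ d) (P.real S) := by simp [offspringPGF]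

theorem measurableSet_retained (w : List (Alpha d M)) : MeasurableSet {ω | Retained d M ω w} := by
  simp only [Retained, ofPred_forall]
  exact .iInter fun u ↦ .iInter fun _ ↦ .iInter fun _ ↦
    measurableSet_eq_fun (measurable_pi_apply _) measurable_const

/-- The event that no retained cube of level `m` has its tree of descendants labeled as in `S`. -/
def avoid (S : Set (PercSpace d M)) (m : ℕ) : Set (PercSpace d M) :=
  {ω | ∀ w : List (Alpha d M), w.length = m → Retained d M ω w → subtree w ω ∉ S}

theorem avoid_anti {T : Set (PercSpace d M)} (hST : S ⊆ T) (m : ℕ) : avoid T m ⊆ avoid S m :=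
  fun _ hω w hw hret hS ↦ hω w hw hret (hST hS)

theorem measurableSet_avoid (hS : MeasurableSet S) (m : ℕ) : MeasurableSet (avoid S m) := by
  simp only [avoid, ofPred_forall]
  exact .iInter fun w ↦ .iInter fun _ ↦ (measurableSet_retained w).imp
    (measurable_subtree w hS.compl)

theorem avoid_zero : avoid S 0 = Sᶜ := by
  ext ω
  simp [avoid, retained_nil, subtree_nil]

theorem avoid_succ :
    avoid S (m + 1) = {ω | ∀ a, childLabel a ω = true → subtree [a] ω ∈ avoid S m} := by
  ext ω
  refine ⟨fun hω a ha w hw hret ↦ ?_, fun hω w hw hret ↦ ?_⟩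
  · rw [← subtree_append]
    exact hω (a :: w) (congrArg Nat.succ hw) (retained_cons.2 ⟨ha, hret⟩)
  · obtain ⟨a, w, rfl⟩ := List.exists_cons_of_length_eq_add_one hw
    rw [retained_cons] at hret
    exact hω a hret.1 w (Nat.succ.inj hw) hret.2

theorem IsBernoulliPerc.measureReal_avoid (hP : IsBernoulliPerc d M p P) (hS : MeasurableSet S)
    (m : ℕ) : P.real (avoid S m) = (offspringPGF p (M ^ d))^[m] (1 - P.real S) := by
  have := hP.1
  induction m with
  | zero => rw [avoid_zero, probReal_compl_eq_one_sub hS, Function.iterate_zero_apply]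
  | succ m ih =>
    rw [avoid_succ, hP.measureReal_forall_childLabel_imp (measurableSet_avoid hS m), ih,
      Function.iterate_succ_apply']

theorem IsBernoulliPerc.measureReal_avoid_diff_avoid_univ (hP : IsBernoulliPerc d M p P)
    (hS : MeasurableSet S) (m : ℕ) : P.real (avoid S m \ avoid univ m) =
      (offspringPGF p (M ^ d))^[m] (1 - P.real S) - (offspringPGF p (M ^ d))^[m] 0 := by
  have := hP.1
  rw [measureReal_sdiff (avoid_anti (subset_univ S) m) (measurableSet_avoid .univ m),
    hP.measureReal_avoid hS, hP.measureReal_avoid .univ, probReal_univ, sub_self]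

end Percolation

section Rows

variable {M : ℕ} [NeZero M] {p : unitInterval} {P : Measure (PercSpace 2 M)} {k : ℕ}

/-- The word of the cube in the bottom row of `[0,1]²` whose horizontal digits are `c`. -/
def rowWord (c : List (Fin M)) : List (Alpha 2 M) := c.map (![·, 0])

theorem rowWord_injective : Function.Injective (rowWord (M := M)) :=
  List.map_injective_iff.2 fun _ _ h ↦ congrFun h 0

/-- The event that all `M ^ k` squares of level `k` in the bottom row of `[0,1]²` are retained. -/
def fullRow (M k : ℕ) [NeZero M] : Set (PercSpace 2 M) :=
  {ω | ∀ c : List (Fin M), c.length = k → Retained 2 M ω (rowWord c)}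

theorem measurableSet_fullRow : MeasurableSet (fullRow M k) := by
  simp only [fullRow, ofPred_forall]
  exact .iInter fun c ↦ .iInter fun _ ↦ measurableSet_retained _

/-- The nonempty words of length at most `k` of squares in the bottom row. -/
def rowWords (M k : ℕ) [NeZero M] : Finset (Word 2 M) :=
  Finset.univ.image fun q : (j : Fin k) × List.Vector (Fin M) (j + 1) ↦
    ⟨rowWord q.2.1, by
      rw [rowWord, Ne, List.map_eq_nil_iff, ← List.length_eq_zero_iff, q.2.2]
      exact Nat.succ_ne_zero _⟩

theorem card_rowWords_le (hM : 2 ≤ M) : (rowWords M k).card ≤ M ^ (k + 1) := by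
  calc (rowWords M k).card ≤ ∑ j : Fin k, M ^ ((j : ℕ) + 1) :=
        Finset.card_image_le.trans_eq (by simp)
    _ ≤ ∑ j ∈ Finset.range (k + 1), M ^ j := by
        rw [Fin.sum_univ_eq_sum_range fun j ↦ M ^ (j + 1), Finset.sum_range_succ']
        exact Nat.le_add_right _ _
    _ ≤ M ^ (k + 1) := (Nat.geomSum_lt hM fun j hj ↦ Finset.mem_range.1 hj).le

theorem forall_rowWords_subset_fullRow :
    {ω : PercSpace 2 M | ∀ w ∈ rowWords M k, ω w = true} ⊆ fullRow M k := by
  intro ω hω c hc u hu hprefix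
  obtain ⟨b, hb, rfl⟩ := List.prefix_map_iff.1 hprefix
  have hb_pos : 0 < b.length := List.length_pos_iff.2 fun h ↦ hu (by rw [h, List.map_nil])
  have hbk : b.length ≤ k := hc ▸ hb.length_le
  exact hω _ (Finset.mem_image.2 ⟨⟨⟨b.length - 1, by lia⟩, ⟨b, (Nat.sub_add_cancel hb_pos).symm⟩⟩,
    Finset.mem_univ _, rfl⟩)

theorem IsBernoulliPerc.pow_le_measureReal_fullRow (hP : IsBernoulliPerc 2 M p P) (hM : 2 ≤ M) :
    (p : ℝ) ^ M ^ (k + 1) ≤ P.real (fullRow M k) := by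
  have := hP.1
  calc (p : ℝ) ^ M ^ (k + 1) ≤ (p : ℝ) ^ (rowWords M k).card :=
        pow_le_pow_of_le_one p.2.1 p.2.2 (card_rowWords_le hM)
    _ = P.real {ω | ∀ w ∈ rowWords M k, ω w = true} := by
        rw [measureReal_def, hP.2 (rowWords M k) fun _ ↦ true]
        simp [p.2.1]
    _ ≤ P.real (fullRow M k) := measureReal_mono forall_rowWords_subset_fullRow

theorem IsBernoulliPerc.exists_measureReal_avoid_fullRow_diff_le (hP : IsBernoulliPerc 2 M p P)
    (hM : 2 ≤ M) (hpM : 1 < (p : ℝ) * (M ^ 2 : ℕ)) :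
    ∃ q : ℕ, ∃ r ∈ Ico (0 : ℝ) 1, ∀ i k : ℕ,
      P.real (avoid (fullRow M k) (i + q * M ^ (k + 1)) \ avoid univ (i + q * M ^ (k + 1))) ≤
        r ^ i := by
  have := hP.1
  obtain ⟨c, hc, r, hr, hiter⟩ := exists_offspringPGF_iterate_sub_le p.2.1 p.2.2 hpM
  have hp : 0 < (p : ℝ) := pos_of_mul_pos_left (one_pos.trans hpM) (Nat.cast_nonneg _)
  obtain ⟨q, hq⟩ := pow_unbounded_of_one_lt (p : ℝ)⁻¹ hc
  refine ⟨q, r, hr, fun i k ↦ ?_⟩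
  rw [hP.measureReal_avoid_diff_avoid_univ measurableSet_fullRow]
  refine hiter _ ⟨sub_nonneg.2 measureReal_le_one, sub_le_self _ measureReal_nonneg⟩ _ _ ?_
  calc 1 ≤ (c ^ q * p) ^ M ^ (k + 1) := one_le_pow₀ ((inv_le_iff_one_le_mul₀ hp).1 hq.le)
    _ = c ^ (q * M ^ (k + 1)) * (p : ℝ) ^ M ^ (k + 1) := by rw [mul_pow, pow_mul]
    _ ≤ c ^ (q * M ^ (k + 1)) * (1 - (1 - P.real (fullRow M k))) := by
      rw [_root_.sub_sub_cancel]
      gcongr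
      exact hP.pow_le_measureReal_fullRow hM

theorem IsBernoulliPerc.exists_ae_eventually_of_avoid_fullRow (hP : IsBernoulliPerc 2 M p P)
    (hM : 2 ≤ M) (hpM : 1 < (p : ℝ) * (M ^ 2 : ℕ)) :
    ∃ lam ∈ Ioo (0 : ℝ) 1, ∀ᵐ ω ∂P, ∀ᶠ n : ℕ in atTop, ∃ k m, m + k = n ∧ lam * n < (M : ℝ) ^ k ∧
      (ω ∈ avoid (fullRow M k) m → ω ∈ avoid univ m) := by
  have := hP.1
  obtain ⟨q, r, hr, hbad⟩ := hP.exists_measureReal_avoid_fullRow_diff_le hM hpM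
  obtain ⟨L, hL, hscale⟩ := exists_scale (hM : 1 < M) q
  choose! i k hki hLk hi using hscale
  have hbound : ∀ᶠ n in atTop, P.real (avoid (fullRow M (k n)) (i n + q * M ^ (k n + 1)) \
      avoid univ (i n + q * M ^ (k n + 1))) ≤ √r ^ n := by
    filter_upwards [eventually_ge_atTop L] with n hn
    calc _ ≤ r ^ i n := hbad (i n) (k n)
      _ = √r ^ (2 * i n) := by rw [pow_mul, Real.sq_sqrt hr.1]
      _ ≤ √r ^ n := pow_le_pow_of_le_one (Real.sqrt_nonneg r) (Real.sqrt_le_one.2 hr.2.le) (hi n hn)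
  have hL0 : (0 : ℝ) < L := by positivity
  refine ⟨(L : ℝ)⁻¹, ⟨inv_pos.2 hL0, inv_lt_one_of_one_lt₀ (by exact_mod_cast hL)⟩, ?_⟩
  filter_upwards [ae_eventually_notMem_of_measureReal_le_pow (Real.sqrt_nonneg r)
    ((Real.sqrt_lt' one_pos).2 (by simpa using hr.2)) hbound] with ω hω
  filter_upwards [hω, eventually_ge_atTop L] with n hn hnL
  refine ⟨k n, i n + q * M ^ (k n + 1), hki n hnL, ?_, fun h ↦ by_contra fun h' ↦ hn ⟨h, h'⟩⟩
  rw [inv_mul_lt_iff₀ hL0]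
  exact_mod_cast hLk n hnL

end Rows

section Geometry

variable {d M : ℕ}

theorem wordBase_nonneg (w : List (Alpha d M)) (i : Fin d) : 0 ≤ wordBase d M w i :=
  Finset.sum_nonneg fun _ _ ↦ by positivity

theorem wordBase_cons [NeZero M] (a : Alpha d M) (w : List (Alpha d M)) (i : Fin d) :
    wordBase d M (a :: w) i = ((a i : ℝ) + wordBase d M w i) / M := by
  have hM : (M : ℝ) ≠ 0 := NeZero.ne _
  rw [add_div, wordBase, wordBase, Finset.sum_div]
  refine (Fin.sum_univ_succ (n := w.length) _).trans (congrArg₂ (· + ·) ?_ ?_)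
  · rw [Fin.val_zero, Nat.cast_zero, neg_zero, zero_sub, zpow_neg_one, div_eq_mul_inv]
    rfl
  · refine Finset.sum_congr rfl fun j _ ↦ ?_
    rw [Fin.val_succ, Nat.cast_succ, neg_add', zpow_sub_one₀ hM (-(j : ℤ) - 1), mul_div_assoc,
      div_eq_mul_inv]
    rfl

theorem wordBase_append [NeZero M] (v w : List (Alpha d M)) (i : Fin d) :
    wordBase d M (v ++ w) i =
      wordBase d M v i + (M : ℝ) ^ (-(v.length : ℤ)) * wordBase d M w i := by
  have hM : (M : ℝ) ≠ 0 := NeZero.ne _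
  induction v with
  | nil => simp [wordBase]
  | cons a v ih =>
    rw [List.cons_append, wordBase_cons, ih, wordBase_cons, List.length_cons, Nat.cast_succ,
      neg_add, zpow_add₀ hM, zpow_neg_one]
    ring

theorem wordBase_add_zpow_le_one [NeZero M] (w : List (Alpha d M)) (i : Fin d) :
    wordBase d M w i + (M : ℝ) ^ (-(w.length : ℤ)) ≤ 1 := by
  have hM : (M : ℝ) ≠ 0 := NeZero.ne _
  induction w with
  | nil => simp [wordBase]
  | cons a w ih =>
    have ha : ((a i : ℕ) : ℝ) + 1 ≤ M := by exact_mod_cast (a i).2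
    calc wordBase d M (a :: w) i + (M : ℝ) ^ (-((a :: w).length : ℤ))
        = (a i + (wordBase d M w i + (M : ℝ) ^ (-(w.length : ℤ)))) / M := by
          rw [wordBase_cons, List.length_cons, Nat.cast_succ, neg_add, zpow_add₀ hM, zpow_neg_one]
          ring
      _ ≤ M / M := by gcongr; linarith
      _ = 1 := div_self hM

theorem mem_interior_wordCube {w : List (Alpha d M)} {x : EuclideanSpace ℝ (Fin d)}
    (hx : ∀ i, x i ∈ Ioo (wordBase d M w i) (wordBase d M w i + (M : ℝ) ^ (-(w.length : ℤ)))) :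
    x ∈ interior (wordCube d M w) := by
  refine mem_interior_iff_mem_nhds.2 (eventually_all.2 fun i ↦ ?_)
  exact (PiLp.continuous_apply 2 _ i).tendsto x (Icc_mem_nhds (hx i).1 (hx i).2)

theorem wordBase_rowWord [NeZero M] (c : List (Fin M)) : wordBase 2 M (rowWord c) 1 = 0 := by
  simp [wordBase, rowWord]

/-- The slope `M⁻ⁿ / 4` is so small that the line stays inside a row of height `M⁻ⁿ` across the
whole unit square. -/
theorem exists_line_meeting_row [NeZero M] (u : List (Alpha 2 M)) :
    ∃ z v : EuclideanSpace ℝ (Fin 2), v 0 ≠ 0 ∧ v 1 ≠ 0 ∧ MeetsOpenSquare z v ∧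
      ∀ w : List (Alpha 2 M), w.length = u.length → wordBase 2 M w 1 = wordBase 2 M u 1 →
        (interior (wordCube 2 M w) ∩ lineSeg z v).Nonempty := by
  have hM : (0 : ℝ) < M := Nat.cast_pos.2 (NeZero.pos M)
  have hy0 := wordBase_nonneg u 1
  have hy1 := wordBase_add_zpow_le_one u 1
  set y : ℝ := wordBase 2 M u 1
  set δ : ℝ := (M : ℝ) ^ (-(u.length : ℤ)) with hδ_def
  have hδ : 0 < δ := zpow_pos hM _
  refine ⟨!₂[0, y + δ / 2], !₂[1, δ / 4], by simp, by simp [hδ.ne'], ⟨1 / 2, ?_⟩,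
    fun w hw hwy ↦ ?_⟩
  · rw [Fin.forall_fin_two]
    constructor
    · norm_num
    · constructor <;> simp <;> linarith
  have hx0 := wordBase_nonneg w 0
  have hx1 := wordBase_add_zpow_le_one w 0
  rw [hw, ← hδ_def] at hx1
  set x : ℝ := wordBase 2 M w 0
  have hheight : (x + δ / 2) * (δ / 4) ∈ Icc 0 (δ / 4) :=
    ⟨by positivity, mul_le_of_le_one_left (by positivity) (by linarith)⟩
  refine ⟨!₂[x + δ / 2, y + δ / 2 + (x + δ / 2) * (δ / 4)], mem_interior_wordCube ?_,
    ⟨x + δ / 2, ?_⟩, ?_⟩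
  · rw [Fin.forall_fin_two, hw, hwy, ← hδ_def]
    constructor <;> constructor <;> simp <;> linarith [hheight.1, hheight.2]
  · ext i
    fin_cases i <;> simp
  · rw [Fin.forall_fin_two]
    constructor <;> constructor <;> simp <;> linarith [hheight.1, hheight.2]

theorem ncard_setOf_length_eq (α : Type*) [Fintype α] (k : ℕ) :
    {c : List α | c.length = k}.ncard = Fintype.card α ^ k := by
  rw [← Nat.card_coe_set_eq, ← card_vector (α := α) k, ← Nat.card_eq_fintype_card]
  rfl

theorem exists_line_of_notMem_avoid_fullRow [NeZero M] {ω : PercSpace 2 M} {k m : ℕ}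
    (hω : ω ∉ avoid (fullRow M k) m) :
    ∃ z v : EuclideanSpace ℝ (Fin 2), v 0 ≠ 0 ∧ v 1 ≠ 0 ∧ MeetsOpenSquare z v ∧
      M ^ k ≤ {w : List (Alpha 2 M) | w.length = m + k ∧ Retained 2 M ω w ∧
        (interior (wordCube 2 M w) ∩ lineSeg z v).Nonempty}.ncard := by
  obtain ⟨w, rfl, hret, hrow⟩ : ∃ w : List (Alpha 2 M), w.length = m ∧ Retained 2 M ω w ∧
      subtree w ω ∈ fullRow M k := by simpa [avoid] using hω
  obtain ⟨z, v, hv0, hv1, hsquare, hline⟩ :=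
    exists_line_meeting_row (w ++ rowWord (List.replicate k (0 : Fin M)))
  refine ⟨z, v, hv0, hv1, hsquare, ?_⟩
  have hinj : Function.Injective fun c : List (Fin M) ↦ w ++ rowWord c :=
    (List.append_right_injective w).comp rowWord_injective
  calc M ^ k = ((fun c : List (Fin M) ↦ w ++ rowWord c) '' {c | c.length = k}).ncard := by
        rw [ncard_image_of_injective _ hinj, ncard_setOf_length_eq, Fintype.card_fin]
    _ ≤ _ := by
        refine ncard_le_ncard ?_ ((List.finite_length_eq _ (w.length + k)).subset fun _ h ↦ h.1)
        rintro _ ⟨c, hc, rfl⟩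
        refine ⟨?_, retained_append.2 ⟨hret, hrow c hc⟩, hline _ ?_ ?_⟩
        · simpa [rowWord] using hc
        · simpa [rowWord] using hc
        · simp only [wordBase_append, wordBase_rowWord]

theorem notMem_avoid_univ_of_percLimit_ne_empty {ω : PercSpace d M} (hω : percLimit d M ω ≠ ∅)
    (m : ℕ) : ω ∉ avoid univ m := by
  intro havoid
  rcases m.eq_zero_or_pos with rfl | hm
  · exact havoid [] rfl (retained_nil ω) (mem_univ _)
  obtain ⟨x, hx⟩ := nonempty_iff_ne_empty.2 hω
  obtain ⟨w, ⟨hw, hret⟩, -⟩ := mem_iUnion₂.1 (mem_iInter₂.1 hx m hm)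
  exact havoid w hw hret (mem_univ _)

end Geometry

/-- if `p > M⁻²` there is `λ ∈ (0,1)` such that, conditioned on
`E ≠ ∅`, almost surely for all large `n` some segment `ℓ ∈ 𝔏` meets the
interiors of more than `λ n` retained level-`n` squares. -/
theorem exists_slice_with_many_squares
    (M : ℕ) (hM : 2 ≤ M) (p : ℝ) (hp0 : ((M : ℝ))⁻¹ ^ 2 < p) (hp1 : p ≤ 1)
    (P : Measure (PercSpace 2 M)) (hP : IsBernoulliPerc 2 M p P) :
    ∃ lam : ℝ, lam ∈ Set.Ioo (0 : ℝ) 1 ∧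
      ∀ᵐ ω ∂(ProbabilityTheory.cond P {ω | percLimit 2 M ω ≠ ∅}),
        ∃ N₆ : ℕ, ∀ n > N₆, ∃ z v : EuclideanSpace ℝ (Fin 2),
          v 0 ≠ 0 ∧ v 1 ≠ 0 ∧ MeetsOpenSquare z v ∧
            lam * n < (({w : List (Alpha 2 M) | w.length = n ∧ Retained 2 M ω w ∧
                (interior (wordCube 2 M w) ∩ lineSeg z v).Nonempty}.ncard : ℝ)) := by
  have : NeZero M := ⟨by lia⟩
  lift p to unitInterval using ⟨(by positivity : 0 ≤ (M : ℝ)⁻¹ ^ 2).trans hp0.le, hp1⟩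
  have hpM : 1 < (p : ℝ) * (M ^ 2 : ℕ) := by
    rwa [inv_pow, inv_lt_iff_one_lt_mul₀ (by positivity), ← Nat.cast_pow] at hp0
  obtain ⟨lam, hlam, hrows⟩ := hP.exists_ae_eventually_of_avoid_fullRow hM hpM
  -- `{E ≠ ∅}` is contained in the measurable event that squares of every level are retained.
  refine ⟨lam, hlam, ae_cond_of_subset (t := ⋂ m, (avoid univ m)ᶜ)
    (fun ω hω ↦ mem_iInter.2 (notMem_avoid_univ_of_percLimit_ne_empty hω))
    (.iInter fun m ↦ (measurableSet_avoid .univ m).compl) ?_⟩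
  filter_upwards [hrows] with ω hω hsurvive
  obtain ⟨N₆, hN₆⟩ := eventually_atTop.1 hω
  refine ⟨N₆, fun n hn ↦ ?_⟩
  obtain ⟨k, m, rfl, hk, himp⟩ := hN₆ n hn.le
  obtain ⟨z, v, hv0, hv1, hsquare, hcard⟩ :=
    exists_line_of_notMem_avoid_fullRow (mt himp (mem_iInter.1 hsurvive m))
  exact ⟨z, v, hv0, hv1, hsquare, hk.trans_le (by exact_mod_cast hcard)⟩
end
end
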